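/- arXiv:2402.10378 — 15 statements merged into one kernel-verified Lean document; each statement's English description precedes it below -/
import Mathlib

section
/- Let V ⊆ (S_1)^n be a d-dimensional F-subspace such that dim_L(V_L) = d ≤ n. If V has the ỹ-local membership property, then the image of ỹ under the natural map S^n → L^n lies in V_L. -/
open MvPolynomial

theorem stmt_0 (F : Type*) [Field F] [IsAlgClosed F] (n : ℕ) (hn : 3 ≤ n) (d : ℕ)
    (hdn : d ≤ n)
    (V : Submodule F (Fin n → MvPolynomial (Fin n) F))
    (hS1 : ∀ q ∈ V, ∀ i : Fin n, q i ∈ Submodule.span F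
      (Set.range (MvPolynomial.X : Fin n → MvPolynomial (Fin n) F)))
    (hdim : Module.finrank F V = d)
    (hdimL : Module.finrank (FractionRing (MvPolynomial (Fin n) F))
      (Submodule.span (FractionRing (MvPolynomial (Fin n) F))
        ((fun w : Fin n → MvPolynomial (Fin n) F => fun i =>
          algebraMap (MvPolynomial (Fin n) F) (FractionRing (MvPolynomial (Fin n) F)) (w i)) ''
            (V : Set (Fin n → MvPolynomial (Fin n) F)))) = d)
    (hloc : ∀ a : Fin n → F, a ∈ Submodule.span F
      ((fun q : Fin n → MvPolynomial (Fin n) F => fun i => MvPolynomial.eval a (q i)) ''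
        (V : Set (Fin n → MvPolynomial (Fin n) F)))) :
    (fun i => algebraMap (MvPolynomial (Fin n) F) (FractionRing (MvPolynomial (Fin n) F))
        (MvPolynomial.X i)) ∈
      Submodule.span (FractionRing (MvPolynomial (Fin n) F))
        ((fun w : Fin n → MvPolynomial (Fin n) F => fun i =>
          algebraMap (MvPolynomial (Fin n) F) (FractionRing (MvPolynomial (Fin n) F)) (w i)) ''
            (V : Set (Fin n → MvPolynomial (Fin n) F))) := by
  classical
  by_contra hy
  obtain ⟨f, hfy, hfV⟩ := Submodule.exists_le_ker_of_notMem hy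
  obtain ⟨s, hs⟩ := IsLocalization.exist_integer_multiples_of_finite
    (nonZeroDivisors (MvPolynomial (Fin n) F))
    (fun i : Fin n => f (Pi.single i (1 : FractionRing (MvPolynomial (Fin n) F))))
  choose c hc using hs
  have key : ∀ w : Fin n → MvPolynomial (Fin n) F,
      algebraMap (MvPolynomial (Fin n) F) (FractionRing (MvPolynomial (Fin n) F))
        (∑ i, w i * c i) =
      algebraMap (MvPolynomial (Fin n) F) (FractionRing (MvPolynomial (Fin n) F)) s *
        f (fun i => algebraMap (MvPolynomial (Fin n) F)
          (FractionRing (MvPolynomial (Fin n) F)) (w i)) := by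
    intro w
    rw [LinearMap.pi_apply_eq_sum_univ f, map_sum, Finset.mul_sum]
    refine Finset.sum_congr rfl fun i _ => ?_
    have h1 : (fun j => if i = j then (1 : FractionRing (MvPolynomial (Fin n) F)) else 0)
        = Pi.single i 1 := by
      funext j
      simp [Pi.single_apply, eq_comm]
    rw [map_mul, hc i, h1, Algebra.smul_def, smul_eq_mul]
    ring
  have hinj : Function.Injective
      (algebraMap (MvPolynomial (Fin n) F) (FractionRing (MvPolynomial (Fin n) F))) :=
    IsFractionRing.injective _ _
  have hV : ∀ q ∈ V, ∑ i, q i * c i = 0 := by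
    intro q hq
    apply hinj
    rw [key, map_zero]
    have : f (fun i => algebraMap (MvPolynomial (Fin n) F)
          (FractionRing (MvPolynomial (Fin n) F)) (q i)) = 0 :=
      hfV (Submodule.subset_span ⟨q, hq, rfl⟩)
    rw [this, mul_zero]
  have hY : ∑ i, (X i : MvPolynomial (Fin n) F) * c i ≠ 0 := by
    intro h0
    have h := key (fun i => X i)
    rw [h0, map_zero] at h
    rcases mul_eq_zero.mp h.symm with h | h
    · exact nonZeroDivisors.ne_zero s.2 (hinj (by rw [h, map_zero]))
    · exact hfy h
  apply hY
  have : Infinite F := IsAlgClosed.instInfinite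
  apply MvPolynomial.funext
  intro a
  have hle : Submodule.span F
      ((fun q : Fin n → MvPolynomial (Fin n) F => fun i => MvPolynomial.eval a (q i)) ''
        (V : Set (Fin n → MvPolynomial (Fin n) F))) ≤
      LinearMap.ker (Fintype.linearCombination F (fun i => eval a (c i))) := by
    rw [Submodule.span_le]
    rintro _ ⟨q, hq, rfl⟩
    have := congrArg (eval a) (hV q hq)
    simpa [Fintype.linearCombination_apply] using this
  have := hle (hloc a)
  simpa [Fintype.linearCombination_apply] using this
end

section
/- Let q_1,…,q_d ∈ (S_1)^n have L-linearly independent images in L^n, and let w ∈ (S_1)^n be such that the image of w in L^n lies in the L-span of the images of q_1,…,q_d. Then there exist homogeneous polynomials h_1,…,h_d, k_1,…,k_d ∈ S with each k_j ≠ 0 such that: (i) in L^n, w = Σ_{j=1}^d (h_j/k_j)·q_j; (ii) for each j, h_j and k_j have no common non-unit divisor in S; (iii) for each j, if h_j ≠ 0 then h_j and k_j are homogeneous of the same total degree, which is at most d, and if h_j = 0 then k_j = 1; and (iv) for every injective map ι : {1,…,d} → {1,…,n}, each k_j divides det(Q_ι) in S, where Q_ι is the d×d matrix whose (s,t) entry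 is the ι(s)-th component of q_t (equivalently, the least common multiple of k_1,…,k_d divides every such d×d minor det(Q_ι)). -/
open MvPolynomial

noncomputable def homPhi (σ F : Type*) [Field F] : MvPolynomial σ F →ₐ[F] Polynomial (MvPolynomial σ F) :=
  aeval (fun i => Polynomial.C (X i) * Polynomial.X)

theorem homPhi_monomial {σ F : Type*} [Field F] (s : σ →₀ ℕ) (r : F) :
    homPhi σ F (monomial s r) = Polynomial.monomial s.degree (monomial s r) := by
  rw [homPhi, aeval_monomial, ← Polynomial.C_mul_X_pow_eq_monomial, monomial_eq (s := s) (a := r)]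
  simp only [mul_pow, Finsupp.prod, Finset.prod_mul_distrib, Finset.prod_pow_eq_pow_sum, map_mul,
    map_prod, map_pow, Finsupp.degree]
  rw [mul_assoc]
  rfl

theorem homPhi_eval {σ F : Type*} [Field F] (p : MvPolynomial σ F) :
    (homPhi σ F p).eval 1 = p := by
  induction p using MvPolynomial.induction_on' with
  | monomial s r => simp [homPhi_monomial]
  | add p q hp hq => simp [hp, hq]

theorem homPhi_coeff {σ F : Type*} [Field F] (p : MvPolynomial σ F) (m : ℕ) :
    (homPhi σ F p).coeff m = homogeneousComponent m p := by
  induction p using MvPolynomial.induction_on' with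
  | monomial s r =>
    rw [homPhi_monomial, Polynomial.coeff_monomial]
    rw [homogeneousComponent_of_mem (isHomogeneous_monomial r rfl)]
    simp [eq_comm]
  | add p q hp hq => simp [hp, hq]

theorem homPhi_hom {σ F : Type*} [Field F] {p : MvPolynomial σ F} {m : ℕ} (h : p.IsHomogeneous m) :
    homPhi σ F p = Polynomial.monomial m p := by
  ext1 k
  rw [homPhi_coeff, Polynomial.coeff_monomial, homogeneousComponent_of_mem h]
  simp [eq_comm]

theorem hom_of_mul {σ F : Type*} [Field F] {a b : MvPolynomial σ F} {m : ℕ}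
    (hab : a * b ≠ 0) (h : (a * b).IsHomogeneous m) : ∃ k ≤ m, a.IsHomogeneous k := by
  have h1 := homPhi_hom h
  rw [map_mul] at h1
  have hne : homPhi σ F a * homPhi σ F b ≠ 0 := by
    rw [h1]; simpa using hab
  have ha := left_ne_zero_of_mul hne
  have hb := right_ne_zero_of_mul hne
  have h2 := congrArg Polynomial.natDegree h1
  have h3 := congrArg Polynomial.natTrailingDegree h1
  rw [Polynomial.natDegree_mul ha hb, Polynomial.natDegree_monomial_eq _ hab] at h2
  rw [Polynomial.natTrailingDegree_mul ha hb, Polynomial.natTrailingDegree_monomial hab] at h3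
  have h4 := Polynomial.natTrailingDegree_le_natDegree (homPhi σ F a)
  have h5 := Polynomial.natTrailingDegree_le_natDegree (homPhi σ F b)
  refine ⟨(homPhi σ F a).natDegree, by omega, ?_⟩
  have h6 : homPhi σ F a = Polynomial.monomial (homPhi σ F a).natDegree
      ((homPhi σ F a).coeff (homPhi σ F a).natDegree) := by
    ext1 k
    rw [Polynomial.coeff_monomial]
    split_ifs with hk
    · rw [hk]
    · rcases lt_or_gt_of_ne hk with hk | hk
      · exact Polynomial.coeff_eq_zero_of_natDegree_lt hk
      · exact Polynomial.coeff_eq_zero_of_lt_natTrailingDegree (by omega)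
  have h7 := homPhi_eval a
  rw [h6, Polynomial.eval_monomial, homPhi_coeff] at h7
  simp only [one_pow, mul_one] at h7
  have h8 := homogeneousComponent_isHomogeneous (homPhi σ F a).natDegree a
  rw [h7] at h8
  exact h8

theorem det_hom {σ F : Type*} [Field F] {d : ℕ} (M : Matrix (Fin d) (Fin d) (MvPolynomial σ F))
    (h : ∀ i j, (M i j).IsHomogeneous 1) : M.det.IsHomogeneous d := by
  rw [Matrix.det_apply]
  refine IsHomogeneous.sum _ _ _ fun s _ => ?_
  have : (∏ i, M (s i) i).IsHomogeneous d := by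
    simpa using IsHomogeneous.prod Finset.univ (fun i => M (s i) i) (fun _ => 1) (fun i _ => h _ _)
  rcases Int.units_eq_one_or (Equiv.Perm.sign s) with hs | hs
  · simpa [hs] using this
  · simpa [hs] using this.neg

theorem exists_minor {K : Type*} [Field K] {d n : ℕ} (A : Fin d → Fin n → K)
    (h : LinearIndependent K A) :
    ∃ ι : Fin d → Fin n, Function.Injective ι ∧
      (Matrix.of fun s t : Fin d => A t (ι s)).det ≠ 0 := by
  have h1 : (Matrix.of A).rank = d := by
    simpa using LinearIndependent.rank_matrix (M := Matrix.of A) h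
  rw [Matrix.rank_eq_finrank_span_cols] at h1
  have h2 := Submodule.exists_fun_fin_finrank_span_eq K (Set.range (Matrix.of A).col)
  rw [h1] at h2
  obtain ⟨f, hf, -, hl⟩ := h2
  choose ι hι using hf
  refine ⟨ι, fun a b hab => hl.injective (by rw [← hι a, ← hι b, hab]), ?_⟩
  have h3 : (Matrix.of fun s t : Fin d => A t (ι s)).row = f := by
    funext s
    rw [← hι s]
    rfl
  rw [← h3, Matrix.linearIndependent_rows_iff_isUnit, Matrix.isUnit_iff_isUnit_det] at hl
  exact hl.ne_zero

theorem cramer_sol {K : Type*} [Field K] {d : ℕ} (M : Matrix (Fin d) (Fin d) K)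
    (c b : Fin d → K) (h : M.mulVec c = b) (j : Fin d) :
    M.det * c j = (M.updateCol j b).det := by
  rw [← Matrix.cramer_apply, Matrix.cramer_eq_adjugate_mulVec, ← h, Matrix.mulVec_mulVec,
    Matrix.adjugate_mul, Matrix.smul_mulVec, Matrix.one_mulVec]
  rfl

theorem reduced_frac {A K : Type*} [CommRing A] [IsDomain A] [UniqueFactorizationMonoid A]
    [Field K] [Algebra A K] [IsFractionRing A K] (x : K) :
    ∃ h k : A, k ≠ 0 ∧ x = algebraMap A K h / algebraMap A K k ∧ IsRelPrime h k ∧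
      (h = 0 → k = 1) := by
  by_cases hx : x = 0
  · exact ⟨0, 1, one_ne_zero, by simp [hx], isRelPrime_one_right, fun _ => rfl⟩
  · refine ⟨IsFractionRing.num A x, IsFractionRing.den A x, nonZeroDivisors.ne_zero (Subtype.prop _),
      (IsFractionRing.mk'_num_den' A x).symm, IsFractionRing.num_den_reduced A x, fun h => ?_⟩
    exfalso
    apply hx
    rw [← IsFractionRing.mk'_num_den' A x, h]
    simp

theorem stmt_1 (F : Type*) [Field F] [IsAlgClosed F] (n : ℕ) (hn : 3 ≤ n) (d : ℕ)
    (q : Fin d → (Fin n → MvPolynomial (Fin n) F))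
    (hS1 : ∀ j : Fin d, ∀ i : Fin n, q j i ∈ Submodule.span F
      (Set.range (MvPolynomial.X : Fin n → MvPolynomial (Fin n) F)))
    (hind : LinearIndependent (FractionRing (MvPolynomial (Fin n) F))
      (fun j : Fin d => fun i : Fin n =>
        algebraMap (MvPolynomial (Fin n) F) (FractionRing (MvPolynomial (Fin n) F)) (q j i)))
    (w : Fin n → MvPolynomial (Fin n) F)
    (hwS1 : ∀ i : Fin n, w i ∈ Submodule.span F
      (Set.range (MvPolynomial.X : Fin n → MvPolynomial (Fin n) F)))
    (hw : (fun i : Fin n =>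
        algebraMap (MvPolynomial (Fin n) F) (FractionRing (MvPolynomial (Fin n) F)) (w i)) ∈
      Submodule.span (FractionRing (MvPolynomial (Fin n) F))
        (Set.range (fun j : Fin d => fun i : Fin n =>
          algebraMap (MvPolynomial (Fin n) F) (FractionRing (MvPolynomial (Fin n) F)) (q j i)))) :
    ∃ h k : Fin d → MvPolynomial (Fin n) F,
      (∀ j, k j ≠ 0) ∧
      (∀ i : Fin n,
        algebraMap (MvPolynomial (Fin n) F) (FractionRing (MvPolynomial (Fin n) F)) (w i) =
          ∑ j : Fin d,
            (algebraMap (MvPolynomial (Fin n) F) (FractionRing (MvPolynomial (Fin n) F)) (h j) /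
              algebraMap (MvPolynomial (Fin n) F) (FractionRing (MvPolynomial (Fin n) F)) (k j)) *
            algebraMap (MvPolynomial (Fin n) F) (FractionRing (MvPolynomial (Fin n) F)) (q j i)) ∧
      (∀ j, IsRelPrime (h j) (k j)) ∧
      (∀ j, h j ≠ 0 → ∃ m : ℕ, m ≤ d ∧ (h j).IsHomogeneous m ∧ (k j).IsHomogeneous m) ∧
      (∀ j, h j = 0 → k j = 1) ∧
      (∀ ι : Fin d → Fin n, Function.Injective ι → ∀ j,
        k j ∣ (Matrix.of fun s t : Fin d => q t (ι s)).det) := by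
  obtain ⟨c, hc⟩ := (Submodule.mem_span_range_iff_exists_fun _).1 hw
  have hc' : ∀ i : Fin n, ∑ j : Fin d, c j * algebraMap (MvPolynomial (Fin n) F)
      (FractionRing (MvPolynomial (Fin n) F)) (q j i) =
      algebraMap (MvPolynomial (Fin n) F) (FractionRing (MvPolynomial (Fin n) F)) (w i) := by
    intro i
    simpa using congrFun hc i
  choose h k hk hck hrel hzero using fun j => reduced_frac (A := MvPolynomial (Fin n) F) (c j)
  have hinj : Function.Injective (algebraMap (MvPolynomial (Fin n) F)
      (FractionRing (MvPolynomial (Fin n) F))) := IsFractionRing.injective _ _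
  have hq1 : ∀ j i, (q j i).IsHomogeneous 1 := fun j i => by
    rw [← mem_homogeneousSubmodule, homogeneousSubmodule_one_eq_span_X]; exact hS1 j i
  have hw1 : ∀ i, (w i).IsHomogeneous 1 := fun i => by
    rw [← mem_homogeneousSubmodule, homogeneousSubmodule_one_eq_span_X]; exact hwS1 i
  have key : ∀ ι : Fin d → Fin n, ∀ j,
      (Matrix.of fun s t : Fin d => q t (ι s)).det * h j =
        k j * ((Matrix.of fun s t : Fin d => q t (ι s)).updateCol j (fun s => w (ι s))).det := by
    intro ι j
    apply hinj
    have h1 := cramer_sol ((Matrix.of fun s t : Fin d => q t (ι s)).map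
      (algebraMap (MvPolynomial (Fin n) F) (FractionRing (MvPolynomial (Fin n) F)))) c
      (algebraMap (MvPolynomial (Fin n) F) (FractionRing (MvPolynomial (Fin n) F)) ∘
        fun s => w (ι s)) (by
        funext s
        simp only [Matrix.mulVec, dotProduct, Matrix.map_apply, Matrix.of_apply,
          Function.comp_apply]
        rw [← hc' (ι s)]
        exact Finset.sum_congr rfl fun _ _ => mul_comm _ _) j
    rw [← Matrix.map_updateCol, ← RingHom.mapMatrix_apply, ← RingHom.mapMatrix_apply,
      ← RingHom.map_det, ← RingHom.map_det, hck j] at h1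
    have hk' : algebraMap (MvPolynomial (Fin n) F)
      (FractionRing (MvPolynomial (Fin n) F)) (k j) ≠ 0 := by
      rw [Ne, map_eq_zero_iff _ hinj]; exact hk j
    rw [map_mul, map_mul, ← h1]
    field_simp
  have hdvd : ∀ ι : Fin d → Fin n, ∀ j, k j ∣ (Matrix.of fun s t : Fin d => q t (ι s)).det :=
    fun ι j => (hrel j).symm.dvd_of_dvd_mul_right ⟨_, key ι j⟩
  refine ⟨h, k, hk, fun i => ?_, hrel, fun j hj => ?_, hzero, fun ι _ j => hdvd ι j⟩
  · rw [← hc' i]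
    exact Finset.sum_congr rfl fun j _ => by rw [hck j]
  · obtain ⟨ι, -, hι⟩ := exists_minor _ hind
    have hdet : (Matrix.of fun s t : Fin d => q t (ι s)).det ≠ 0 := by
      intro h0
      apply hι
      have h1 := congrArg (algebraMap (MvPolynomial (Fin n) F)
        (FractionRing (MvPolynomial (Fin n) F))) h0
      rw [RingHom.map_det, map_zero] at h1
      exact h1
    have hDh : (Matrix.of fun s t : Fin d => q t (ι s)).det.IsHomogeneous d :=
      det_hom _ fun s t => hq1 t (ι s)
    have hEh : ((Matrix.of fun s t : Fin d => q t (ι s)).updateCol j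
        (fun s => w (ι s))).det.IsHomogeneous d := by
      refine det_hom _ fun s t => ?_
      rw [Matrix.updateCol_apply]
      split_ifs
      · exact hw1 _
      · exact hq1 t (ι s)
    have hkey := key ι j
    obtain ⟨b, hb⟩ := hdvd ι j
    generalize (Matrix.of fun s t : Fin d => q t (ι s)).det = D at *
    generalize ((Matrix.of fun s t : Fin d => q t (ι s)).updateCol j
        (fun s => w (ι s))).det = E at *
    have hE : E = h j * b := by
      apply mul_left_cancel₀ (hk j)
      rw [← hkey, hb]; ring
    have hb0 : b ≠ 0 := by rintro rfl; exact hdet (by simpa using hb)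
    subst hE
    subst hb
    obtain ⟨m, hm, hkm⟩ := hom_of_mul hdet hDh
    obtain ⟨m', hm', hhm⟩ := hom_of_mul (mul_ne_zero hj hb0) hEh
    have e1 := (hDh.mul hhm).totalDegree (mul_ne_zero hdet hj)
    have e2 := (hkm.mul hEh).totalDegree (mul_ne_zero (hk j) (mul_ne_zero hj hb0))
    rw [hkey] at e1
    obtain rfl : m = m' := by omega
    exact ⟨m, hm, hhm, hkm⟩
end

section
/- Let d < n and let q_1,…,q_d ∈ (S_1)^n have L-linearly independent images in L^n. Assume that in L^n the vector ỹ lies in the L-span of the images of q_1,…,q_d, and suppose h_1,…,h_d, k_1,…,k_d ∈ S are homogeneous polynomials with each k_j ≠ 0 such that ỹ = Σ_{j=1}^d (h_j/k_j)·q_j in L^n, where for each j either h_j = 0 and k_j = 1, or h_j ≠ 0, h_j and k_j have no common non-unit divisor in S, and h_j and k_j have the same total degree. Then every least common multiple m of k_1,…,k_d (i.e., every m ∈ S such that each k_j divides m and m divides every common multiple of k_1,…,k_d) has total degree strictly less than d. -/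
open MvPolynomial

/-- A matrix with independent rows has a nonzero maximal minor. -/
theorem exists_minor_ne_zero {K : Type*} [Field K] {d n : ℕ} (A : Matrix (Fin d) (Fin n) K)
    (hA : LinearIndependent K A.row) :
    ∃ g : Fin d → Fin n, (Matrix.of fun r j => A j (g r)).det ≠ 0 := by
  have hr : Module.finrank K (Submodule.span K (Set.range A.col)) = d := by
    rw [← Matrix.rank_eq_finrank_span_cols, hA.rank_matrix, Fintype.card_fin]
  obtain ⟨f, hf, -, hli⟩ 
    := Submodule.exists_fun_fin_finrank_span_eq K (Set.range A.col)
  choose g hg using hf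
  refine ⟨fun r => g (Fin.cast hr.symm r), ?_⟩
  have h2 : LinearIndependent K
      (Matrix.of fun (r j : Fin d) => A j (g (Fin.cast hr.symm r))).row := by
    have h3 := hli.comp (Fin.cast hr.symm) (Fin.cast_injective _)
    have h4 : f ∘ Fin.cast hr.symm =
        (Matrix.of fun (r j : Fin d) => A j (g (Fin.cast hr.symm r))).row := by
      funext r
      simp only [Function.comp, ← hg]
      rfl
    rw [h4] at h3
    exact h3
  rw [Matrix.linearIndependent_rows_iff_isUnit, Matrix.isUnit_iff_isUnit_det] at h2
  exact h2.ne_zero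



theorem stmt_2 (F : Type*) [Field F] [IsAlgClosed F] (n : ℕ) (hn : 3 ≤ n) (d : ℕ) (hdn : d < n)
    (q : Fin d → (Fin n → MvPolynomial (Fin n) F))
    (hS1 : ∀ j : Fin d, ∀ i : Fin n, q j i ∈ Submodule.span F
      (Set.range (MvPolynomial.X : Fin n → MvPolynomial (Fin n) F)))
    (hind : LinearIndependent (FractionRing (MvPolynomial (Fin n) F))
      (fun j : Fin d => fun i : Fin n =>
        algebraMap (MvPolynomial (Fin n) F) (FractionRing (MvPolynomial (Fin n) F)) (q j i)))
    (hy : (fun i : Fin n =>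
        algebraMap (MvPolynomial (Fin n) F) (FractionRing (MvPolynomial (Fin n) F))
          (MvPolynomial.X i)) ∈
      Submodule.span (FractionRing (MvPolynomial (Fin n) F))
        (Set.range (fun j : Fin d => fun i : Fin n =>
          algebraMap (MvPolynomial (Fin n) F) (FractionRing (MvPolynomial (Fin n) F)) (q j i))))
    (h k : Fin d → MvPolynomial (Fin n) F)
    (hk0 : ∀ j, k j ≠ 0)
    (heq : ∀ i : Fin n,
      algebraMap (MvPolynomial (Fin n) F) (FractionRing (MvPolynomial (Fin n) F))
          (MvPolynomial.X i) =
        ∑ j : Fin d,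
          (algebraMap (MvPolynomial (Fin n) F) (FractionRing (MvPolynomial (Fin n) F)) (h j) /
            algebraMap (MvPolynomial (Fin n) F) (FractionRing (MvPolynomial (Fin n) F)) (k j)) *
          algebraMap (MvPolynomial (Fin n) F) (FractionRing (MvPolynomial (Fin n) F)) (q j i))
    (hcond : ∀ j, (h j = 0 ∧ k j = 1) ∨
      (h j ≠ 0 ∧ IsRelPrime (h j) (k j) ∧
        ∃ m : ℕ, (h j).IsHomogeneous m ∧ (k j).IsHomogeneous m))
    (m : MvPolynomial (Fin n) F)
    (hm1 : ∀ j, k j ∣ m)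
    (hm2 : ∀ c : MvPolynomial (Fin n) F, (∀ j, k j ∣ c) → m ∣ c) :
    m.totalDegree < d := by
  classical
  have hinj : Function.Injective (algebraMap (MvPolynomial (Fin n) F) (FractionRing (MvPolynomial (Fin n) F))) := IsFractionRing.injective _ _
  let B : (Fin d → Fin n) → Matrix (Fin d) (Fin d) (MvPolynomial (Fin n) F) := fun g => Matrix.of fun r j => q j (g r)
  let v : Fin d → FractionRing (MvPolynomial (Fin n) F) := fun j => algebraMap (MvPolynomial (Fin n) F) (FractionRing (MvPolynomial (Fin n) F)) (h j) / algebraMap (MvPolynomial (Fin n) F) (FractionRing (MvPolynomial (Fin n) F)) (k j)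
  have hBv : ∀ g : Fin d → Fin n, ((B g).map (algebraMap (MvPolynomial (Fin n) F) (FractionRing (MvPolynomial (Fin n) F)))).mulVec v
      = fun r => algebraMap (MvPolynomial (Fin n) F) (FractionRing (MvPolynomial (Fin n) F)) (X (g r)) := by
    intro g
    funext r
    rw [heq (g r)]
    simp only [Matrix.mulVec, dotProduct, B, v, Matrix.map_apply, Matrix.of_apply]
    exact Finset.sum_congr rfl fun j _ => mul_comm _ _
  -- each minor is divisible by each denominator
  have hkD : ∀ g j, k j ∣ (B g).det := by
    intro g j
    rcases hcond j with ⟨-, h1⟩ | ⟨-, hrel, -⟩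
    · rw [h1]; exact one_dvd _
    · refine hrel.symm.dvd_of_dvd_mul_right ?_
      refine ⟨(B g).adjugate.mulVec (fun r => X (g r)) j, hinj ?_⟩
      have h1 : ((B g).map (algebraMap (MvPolynomial (Fin n) F) (FractionRing (MvPolynomial (Fin n) F)))).adjugate.mulVec
          (fun r => algebraMap (MvPolynomial (Fin n) F) (FractionRing (MvPolynomial (Fin n) F)) (X (g r))) = ((B g).map (algebraMap (MvPolynomial (Fin n) F) (FractionRing (MvPolynomial (Fin n) F)))).det • v := by
        rw [← hBv, Matrix.mulVec_mulVec, Matrix.adjugate_mul, Matrix.smul_mulVec,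
          Matrix.one_mulVec]
      have h2 := congrFun h1 j
      have h3 : ((B g).map (algebraMap (MvPolynomial (Fin n) F) (FractionRing (MvPolynomial (Fin n) F)))).adjugate = (B g).adjugate.map (algebraMap (MvPolynomial (Fin n) F) (FractionRing (MvPolynomial (Fin n) F))) :=
        ((algebraMap (MvPolynomial (Fin n) F) (FractionRing (MvPolynomial (Fin n) F))).map_adjugate (B g)).symm
      have h4 : ((B g).map (algebraMap (MvPolynomial (Fin n) F) (FractionRing (MvPolynomial (Fin n) F)))).det = algebraMap (MvPolynomial (Fin n) F) (FractionRing (MvPolynomial (Fin n) F)) (B g).det :=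
        ((algebraMap (MvPolynomial (Fin n) F) (FractionRing (MvPolynomial (Fin n) F))).map_det (B g)).symm
      have hk : algebraMap (MvPolynomial (Fin n) F) (FractionRing (MvPolynomial (Fin n) F)) (k j) ≠ 0 := fun hz => hk0 j (hinj (by rw [hz, map_zero]))
      have h5 : algebraMap (MvPolynomial (Fin n) F) (FractionRing (MvPolynomial (Fin n) F)) ((B g).adjugate.mulVec (fun r => X (g r)) j)
          = algebraMap (MvPolynomial (Fin n) F) (FractionRing (MvPolynomial (Fin n) F)) (B g).det * v j := by
        rw [← h4, ← smul_eq_mul, ← Pi.smul_apply, ← h2, h3, RingHom.map_mulVec]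
        rfl
      rw [map_mul, map_mul, h5]
      simp only [v]
      field_simp
  have hmD : ∀ g, m ∣ (B g).det := fun g => hm2 _ (hkD g)
  have hdeg : ∀ g, ((B g).det).totalDegree ≤ d := by
    intro g
    refine IsHomogeneous.totalDegree_le ?_
    rw [Matrix.det_apply]
    refine IsHomogeneous.sum _ _ _ fun σ _ => ?_
    have hp : (∏ i, B g (σ i) i).IsHomogeneous d := by
      have := IsHomogeneous.prod Finset.univ (fun i => B g (σ i) i) (fun _ => 1) (fun i _ => by
        have := hS1 i (g (σ i))
        rw [← homogeneousSubmodule_one_eq_span_X] at this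
        exact this)
      simpa using this
    rcases Int.units_eq_one_or (Equiv.Perm.sign σ) with hs | hs <;> rw [hs]
    · simpa using hp
    · simpa using hp.neg
  by_contra hlt
  push Not at hlt
  have hc : ∀ g, ∃ c : F, (B g).det = C c * m := by
    intro g
    by_cases h0 : (B g).det = 0
    · exact ⟨0, by simp [h0]⟩
    obtain ⟨c, hc⟩ := hmD g
    have hm0 : m ≠ 0 := by rintro rfl; simp [hc] at h0
    have hc0 : c ≠ 0 := by rintro rfl; simp [hc] at h0
    have ht := totalDegree_mul_of_isDomain hm0 hc0
    have hd := hdeg g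
    rw [hc] at hd
    have : c.totalDegree = 0 := by omega
    rw [totalDegree_eq_zero_iff_eq_C] at this
    refine ⟨coeff 0 c, ?_⟩
    rw [← this, hc, mul_comm]
  choose c hc using hc
  obtain ⟨g, hg⟩ := exists_minor_ne_zero (Matrix.of fun (j : Fin d) (i : Fin n) =>
    algebraMap (MvPolynomial (Fin n) F) (FractionRing (MvPolynomial (Fin n) F)) (q j i)) hind
  have hg0 : (B g).det ≠ 0 := by
    intro h0
    apply hg
    have := (algebraMap (MvPolynomial (Fin n) F) (FractionRing (MvPolynomial (Fin n) F))).map_det (B g)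
    rw [h0, map_zero] at this
    exact this.symm
  obtain ⟨i0, hi0⟩ : ∃ i0, i0 ∉ Set.range g := by
    by_contra hcon
    push Not at hcon
    have := Fintype.card_le_of_surjective g hcon
    simp at this
    omega
  let f : Fin (d + 1) → Fin n := Fin.cons i0 g
  let A : Matrix (Fin (d + 1)) (Fin (d + 1)) (MvPolynomial (Fin n) F) :=
    Matrix.of fun a => Fin.cons (X (f a)) (fun j => q j (f a))
  have hA : A.det = 0 := by
    apply hinj
    rw [map_zero, RingHom.map_det]
    rw [← Matrix.exists_mulVec_eq_zero_iff]
    refine ⟨Fin.cons (-1) v, fun hz => by simpa using congrFun hz 0, ?_⟩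
    funext a
    simp only [Matrix.mulVec, dotProduct, Fin.sum_univ_succ, Fin.cons_zero, Fin.cons_succ,
      RingHom.mapMatrix_apply, Matrix.map_apply, A, Matrix.of_apply, Pi.zero_apply]
    rw [heq (f a)]
    simp only [v]
    rw [mul_neg_one, neg_add_eq_zero]
    exact Finset.sum_congr rfl fun j _ => mul_comm _ _
  rw [Matrix.det_succ_column_zero] at hA
  have hsub : ∀ a : Fin (d + 1), (A.submatrix a.succAbove Fin.succ) = B (f ∘ a.succAbove) := by
    intro a; ext r j; simp [A, B]
  have hA0 : ∀ a, A a 0 = X (f a) := fun a => by simp [A]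
  simp only [hsub, hc, hA0] at hA
  have hm0 : m ≠ 0 := by rintro rfl; exact hg0 (by rw [hc]; simp)
  have hA2 : m * ∑ a : Fin (d + 1), C ((-1) ^ (a : ℕ) * c (f ∘ a.succAbove)) * X (f a) = 0 := by
    rw [← hA, Finset.mul_sum]
    refine Finset.sum_congr rfl fun a _ => ?_
    simp only [map_mul, map_pow, map_neg, map_one]
    ring
  have hA3 := (mul_eq_zero.mp hA2).resolve_left hm0
  have hco := congrArg (coeff (Finsupp.single i0 1)) hA3
  rw [Fin.sum_univ_succ, coeff_add, coeff_sum, Finset.sum_eq_zero] at hco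
  · have hfg : f ∘ (0 : Fin (d+1)).succAbove = g := by
      funext r; simp [f]
    have hf0 : f 0 = i0 := rfl
    rw [hfg, hf0] at hco
    simp [coeff_C_mul] at hco
    exact hg0 (by rw [hc, hco]; simp)
  · intro r _
    have hne : g r ≠ i0 := fun hh => hi0 ⟨r, hh⟩
    have : f r.succ = g r := rfl
    rw [coeff_C_mul, this, coeff_X', if_neg, mul_zero]
    intro hh
    exact hne (Finsupp.single_left_injective one_ne_zero hh)
end

section
/- Let d < n and let q_1,…,q_d ∈ (S_1)^n have L-linearly independent images in L^n. Assume that in L^n the vector ỹ lies in the L-span of the images of q_1,…,q_d. If there exists an injective map ι : {1,…,d} → {1,…,n} such that det(Q_ι) is irreducible in S, where Q_ι is the d×d matrix whose (s,t) entry is the ι(s)-th component of q_t, then ỹ lies in the F-span of q_1,…,q_d in S^n, i.e., there exist α_1,…,α_d ∈ F with ỹ = Σ_{j=1}^d α_j·q_j. -/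
open MvPolynomial

lemma aux_det_hom {F : Type*} [Field F] {n d : ℕ}
    (A : Matrix (Fin d) (Fin d) (MvPolynomial (Fin n) F))
    (hA : ∀ i j, (A i j).IsHomogeneous 1) : A.det.IsHomogeneous d := by
  rw [Matrix.det_apply']
  refine IsHomogeneous.sum _ _ _ fun σ _ => ?_
  have h1 : (∏ i, A (σ i) i).IsHomogeneous (∑ i : Fin d, 1) :=
    IsHomogeneous.prod _ _ _ fun i _ => hA _ _
  have h2 : (((Equiv.Perm.sign σ : ℤ) : MvPolynomial (Fin n) F)).IsHomogeneous 0 := by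
    have := isHomogeneous_C (Fin n) (((Equiv.Perm.sign σ : ℤ) : F))
    simpa using this
  have := h2.mul h1
  simpa using this

lemma aux_const {F : Type*} [Field F] {n d : ℕ} {D m : MvPolynomial (Fin n) F}
    (hD0 : D ≠ 0) (hD : D.IsHomogeneous d) (hm : m.IsHomogeneous d) (h : D ∣ m) :
    ∃ a : F, m = D * C a := by
  obtain ⟨e, rfl⟩ := h
  by_cases he : e = 0
  · exact ⟨0, by simp [he]⟩
  have h1 := totalDegree_mul_of_isDomain hD0 he
  rw [hm.totalDegree (mul_ne_zero hD0 he), hD.totalDegree hD0] at h1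
  have h2 : e.totalDegree = 0 := by omega
  rw [totalDegree_eq_zero_iff_eq_C] at h2
  exact ⟨_, by rw [← h2]⟩

theorem stmt_3 (F : Type*) [Field F] [IsAlgClosed F] (n : ℕ) (hn : 3 ≤ n) (d : ℕ) (hdn : d < n)
    (q : Fin d → (Fin n → MvPolynomial (Fin n) F))
    (hS1 : ∀ j : Fin d, ∀ i : Fin n, q j i ∈ Submodule.span F
      (Set.range (MvPolynomial.X : Fin n → MvPolynomial (Fin n) F)))
    (hind : LinearIndependent (FractionRing (MvPolynomial (Fin n) F))
      (fun j : Fin d => fun i : Fin n =>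
        algebraMap (MvPolynomial (Fin n) F) (FractionRing (MvPolynomial (Fin n) F)) (q j i)))
    (hy : (fun i : Fin n =>
        algebraMap (MvPolynomial (Fin n) F) (FractionRing (MvPolynomial (Fin n) F))
          (MvPolynomial.X i)) ∈
      Submodule.span (FractionRing (MvPolynomial (Fin n) F))
        (Set.range (fun j : Fin d => fun i : Fin n =>
          algebraMap (MvPolynomial (Fin n) F) (FractionRing (MvPolynomial (Fin n) F)) (q j i))))
    (hirr : ∃ ι : Fin d → Fin n, Function.Injective ι ∧
      Irreducible (Matrix.of fun s t : Fin d => q t (ι s)).det) :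
    ∃ α : Fin d → F,
      (fun i : Fin n => (MvPolynomial.X i : MvPolynomial (Fin n) F)) =
        ∑ j : Fin d, α j • q j := by
  classical
  obtain ⟨ι, hι, hirr⟩ := hirr
  have hS : ∀ j i, (q j i).IsHomogeneous 1 := by
    intro j i
    rw [← mem_homogeneousSubmodule]
    refine (Submodule.span_le.2 ?_) (hS1 j i)
    rintro _ ⟨k, rfl⟩
    exact isHomogeneous_X F k
  set Q : Matrix (Fin d) (Fin d) (MvPolynomial (Fin n) F) :=
    Matrix.of fun s t : Fin d => q t (ι s) with hQ
  have hD0 : Q.det ≠ 0 := hirr.ne_zero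
  have hDhom : Q.det.IsHomogeneous d := aux_det_hom Q fun i j => hS _ _
  set v : Fin d → MvPolynomial (Fin n) F := Q.cramer (fun s => X (ι s)) with hv
  have hvhom : ∀ j, (v j).IsHomogeneous d := by
    intro j
    rw [hv, Matrix.cramer_apply]
    refine aux_det_hom _ fun a b => ?_
    rw [Matrix.updateCol_apply]
    split_ifs
    · exact isHomogeneous_X F _
    · exact hS _ _
  -- the key relation
  have key : ∀ i, Q.det * X i = ∑ j, v j * q j i := by
    rw [Submodule.mem_span_range_iff_exists_fun] at hy
    obtain ⟨c, hc⟩ := hy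
    set φ := algebraMap (MvPolynomial (Fin n) F) (FractionRing (MvPolynomial (Fin n) F)) with hφ
    have hc' : ∀ i, ∑ j, c j * φ (q j i) = φ (X i) := by
      intro i
      have := congrFun hc i
      simpa [Finset.sum_apply] using this
    have hvc : ∀ j, φ (v j) = φ Q.det * c j := by
      have e1 : (Q.map φ).mulVec c = fun s => φ (X (ι s)) := by
        funext s
        rw [← hc']
        simp [Matrix.mulVec, dotProduct, hQ, mul_comm]
      have e2 : (Q.map φ).adjugate.mulVec ((Q.map φ).mulVec c) = (Q.map φ).det • c := by
        rw [Matrix.mulVec_mulVec, Matrix.adjugate_mul, Matrix.smul_mulVec, Matrix.one_mulVec]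
      intro j
      have e3 := congrFun e2 j
      rw [e1] at e3
      have e4 : (Q.map φ).det = φ Q.det := (RingHom.map_det φ Q).symm
      have e5 : (Q.map φ).adjugate = Q.adjugate.map φ := (RingHom.map_adjugate φ Q).symm
      rw [e4, e5] at e3
      rw [hv, Matrix.cramer_eq_adjugate_mulVec]
      simpa [Matrix.mulVec, dotProduct] using e3
    intro i
    apply IsFractionRing.injective (MvPolynomial (Fin n) F)
      (FractionRing (MvPolynomial (Fin n) F))
    change φ _ = φ _
    rw [map_mul, ← hc', map_sum, Finset.mul_sum]
    refine Finset.sum_congr rfl fun j _ => ?_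
    rw [map_mul, hvc, mul_assoc]
  by_cases hdiv : ∀ j, Q.det ∣ v j
  · choose α hα using fun j => aux_const hD0 hDhom (hvhom j) (hdiv j)
    refine ⟨α, ?_⟩
    funext i
    apply mul_left_cancel₀ hD0
    rw [key, Finset.sum_apply, Finset.mul_sum]
    refine Finset.sum_congr rfl fun j _ => ?_
    rw [hα, Pi.smul_apply, smul_eq_C_mul, mul_assoc]
  · exfalso
    push Not at hdiv
    obtain ⟨j₀, hj₀⟩ := hdiv
    -- every maximal minor is divisible by the determinant
    have hminor : ∀ κ : Fin d → Fin n,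
        Q.det ∣ (Matrix.of fun s t : Fin d => q t (κ s)).det := by
      intro κ
      set A : Matrix (Fin d) (Fin d) (MvPolynomial (Fin n) F) :=
        Matrix.of fun s t : Fin d => q t (κ s) with hA
      have e1 : A.mulVec v = Q.det • fun s => X (κ s) := by
        funext s
        simp [Matrix.mulVec, dotProduct, hA, key, mul_comm]
      have e2 : A.adjugate.mulVec (A.mulVec v) = A.det • v := by
        rw [Matrix.mulVec_mulVec, Matrix.adjugate_mul, Matrix.smul_mulVec, Matrix.one_mulVec]
      rw [e1, Matrix.mulVec_smul] at e2
      have e3 := congrFun e2 j₀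
      have : Q.det ∣ A.det * v j₀ := ⟨_, e3.symm⟩
      exact ((hirr.prime.dvd_or_dvd this).resolve_right hj₀)
    obtain ⟨i₀, hi₀⟩ : ∃ i₀, ∀ s, ι s ≠ i₀ := by
      by_contra hcon
      push Not at hcon
      have := Fintype.card_le_of_surjective ι hcon
      simp at this
      omega
    let r : Fin (d + 1) → Fin n := Fin.cons i₀ ι
    let B : Matrix (Fin (d + 1)) (Fin (d + 1)) (MvPolynomial (Fin n) F) :=
      Matrix.of fun k => Fin.cons (X (r k)) (fun t => q t (r k))
    have hB : B.det = 0 := by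
      rw [← Matrix.exists_mulVec_eq_zero_iff]
      refine ⟨Fin.cons Q.det (fun j => - v j), ?_, ?_⟩
      · intro h0
        exact hD0 (by simpa using congrFun h0 0)
      · funext k
        simp only [Matrix.mulVec, dotProduct, B, Fin.sum_univ_succ, Matrix.of_apply,
          Fin.cons_zero, Fin.cons_succ, Pi.zero_apply]
        rw [mul_comm, key]
        simp [mul_comm]
    rw [Matrix.det_succ_column_zero] at hB
    have hm : ∀ k : Fin (d + 1), ∃ a : F,
        (B.submatrix k.succAbove Fin.succ).det = Q.det * C a := by
      intro k
      have e : B.submatrix k.succAbove Fin.succ =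
          Matrix.of fun s t : Fin d => q t (r (k.succAbove s)) := by
        ext1 s t
        simp [B]
      rw [e]
      exact aux_const hD0 hDhom (aux_det_hom _ fun i j => hS _ _) (hminor _)
    choose a ha using hm
    have ha0 : a 0 = 1 := by
      have e : B.submatrix (Fin.succAbove 0) Fin.succ = Q := by
        ext1 s t
        simp [B, hQ, r]
      have h0 := ha 0
      rw [e] at h0
      have h1 : (C (a 0) : MvPolynomial (Fin n) F) = C 1 := by
        apply mul_left_cancel₀ hD0
        rw [← h0]
        simp
      exact C_injective _ _ h1
    have hsum : Q.det * ∑ k : Fin (d + 1), (-1) ^ (k : ℕ) * X (r k) * C (a k) = 0 := by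
      rw [← hB, Finset.mul_sum]
      refine Finset.sum_congr rfl fun k _ => ?_
      rw [ha]
      simp only [B, Matrix.of_apply, Fin.cons_zero]
      ring
    have h0 := (mul_eq_zero.1 hsum).resolve_left hD0
    have h1 := congrArg (MvPolynomial.eval (Pi.single i₀ (1 : F))) h0
    rw [Fin.sum_univ_succ] at h1
    simp [r, ha0, Pi.single_apply, hi₀] at h1
end

section
/- Let V ⊆ (S_1)^n be a 1-dimensional F-subspace. If V has the ỹ-local membership property, then ỹ ∈ V. -/
open MvPolynomial

theorem stmt_5 (F : Type*) [Field F] [IsAlgClosed F] (n : ℕ) (hn : 3 ≤ n)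
    (V : Submodule F (Fin n → MvPolynomial (Fin n) F))
    (hS1 : ∀ q ∈ V, ∀ i : Fin n, q i ∈ Submodule.span F
      (Set.range (MvPolynomial.X : Fin n → MvPolynomial (Fin n) F)))
    (hdim : Module.finrank F V = 1)
    (hloc : ∀ a : Fin n → F, a ∈ Submodule.span F
      ((fun q : Fin n → MvPolynomial (Fin n) F => fun i => MvPolynomial.eval a (q i)) ''
        (V : Set (Fin n → MvPolynomial (Fin n) F)))) :
    (fun i : Fin n => (MvPolynomial.X i : MvPolynomial (Fin n) F)) ∈ V := by
  obtain ⟨⟨q, hqV⟩, -, hq⟩ := finrank_eq_one_iff'.mp hdim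
  have hM : ∀ i, ∃ c : Fin n → F, ∑ j, c j • (X j : MvPolynomial (Fin n) F) = q i := fun i =>
    (Submodule.mem_span_range_iff_exists_fun F).mp (hS1 q hqV i)
  choose M hM using hM
  have hev : ∀ (a : Fin n → F) i, eval a (q i) = ∑ j, M i j * a j := by
    intro a i
    rw [← hM i]
    simp [map_sum, smul_eval]
  have key : ∀ a : Fin n → F, ∃ c : F, ∀ i, a i = c * ∑ j, M i j * a j := by
    intro a
    have h : a ∈ Submodule.span F {(fun i => ∑ j, M i j * a j : Fin n → F)} := by
      refine Submodule.span_le.mpr ?_ (hloc a)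
      rintro _ ⟨p, hp, rfl⟩
      obtain ⟨c, hc⟩ := hq ⟨p, hp⟩
      have hc' : c • q = p := congrArg Subtype.val hc
      refine Submodule.mem_span_singleton.mpr ⟨c, ?_⟩
      funext i
      simp [← hc', hev, smul_eval]
    obtain ⟨c, hc⟩ := Submodule.mem_span_singleton.mp h
    exact ⟨c, fun i => by rw [← congrFun hc i]; simp⟩
  have hoff : ∀ i j, i ≠ j → M i j = 0 := by
    intro i j hij
    obtain ⟨c, hc⟩ := key (Pi.single j 1)
    have h1 := hc j
    have h2 := hc i
    simp [Pi.single_apply, hij] at h1 h2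
    rcases h2 with h2 | h2
    · simp [h2] at h1
    · exact h2
  obtain ⟨c, hc⟩ := key (fun _ => 1)
  have hX : (fun i : Fin n => (X i : MvPolynomial (Fin n) F)) = c • q := by
    funext i
    have h := hc i
    rw [Finset.sum_eq_single i (fun j _ hj => by simp [hoff i j hj.symm]) (by simp)] at h
    rw [Pi.smul_apply, ← hM i,
      Finset.sum_eq_single i (fun j _ hj => by simp [hoff i j hj.symm]) (by simp), smul_smul]
    rw [mul_one] at h
    rw [← h, one_smul]
  rw [hX]
  exact V.smul_mem c hqV
end

section
/- Assume n ≥ 3 and that char(F) = 0 or char(F) > n. Let V ⊆ (S_1)^n be a 2-dimensional F-subspace whose image in L^n spans a 2-dimensional L-subspace (equivalently, an F-basis of V has L-linearly independent images in L^n; equivalently, the S-submodule of S^n generated by V is free of rank 2). If V has the ỹ-local membership property, then ỹ ∈ V. -/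
open MvPolynomial

noncomputable def linForm {F : Type*} [Field F] {n : ℕ} (v : Fin n → F) : MvPolynomial (Fin n) F :=
  ∑ j, C (v j) * X j

lemma eval_linForm {F : Type*} [Field F] {n : ℕ} (v a : Fin n → F) :
    eval a (linForm v) = ∑ j, v j * a j := by
  simp [linForm]

lemma linForm_smul {F : Type*} [Field F] {n : ℕ} (c : F) (v : Fin n → F) :
    linForm (c • v) = C c * linForm v := by
  simp [linForm, Finset.mul_sum, mul_assoc]

lemma pderiv_linForm {F : Type*} [Field F] {n : ℕ} (v : Fin n → F) (j : Fin n) :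
    pderiv j (linForm v) = C (v j) := by
  simp [linForm, pderiv_X, Pi.single_apply]

lemma linForm_inj {F : Type*} [Field F] {n : ℕ} {v w : Fin n → F}
    (h : linForm v = linForm w) : v = w := by
  funext j
  have := congrArg (pderiv j) h
  simpa [pderiv_linForm] using this

lemma linForm_zero {F : Type*} [Field F] {n : ℕ} : linForm (0 : Fin n → F) = 0 := by
  simp [linForm]

lemma totalDegree_linForm_le {F : Type*} [Field F] {n : ℕ} (v : Fin n → F) :
    (linForm v).totalDegree ≤ 1 := by
  unfold linForm
  refine (totalDegree_finsetSum _ _).trans ?_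
  refine Finset.sup_le fun j _ => ?_
  refine (totalDegree_mul _ _).trans ?_
  simp

lemma exists_linForm {F : Type*} [Field F] {n : ℕ} {q : MvPolynomial (Fin n) F}
    (hq : q ∈ Submodule.span F (Set.range (X : Fin n → MvPolynomial (Fin n) F))) :
    ∃ v, q = linForm v := by
  obtain ⟨c, rfl⟩ := (Submodule.mem_span_range_iff_exists_fun F).1 hq
  exact ⟨c, by simp [linForm, smul_eq_C_mul]⟩

/-- a linear form divisible by a nonconstant polynomial is a constant multiple of it -/
lemma const_quot {F : Type*} [Field F] {n : ℕ} {p : MvPolynomial (Fin n) F} (hp : Irreducible p)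
    {v : Fin n → F} (h : p ∣ linForm v) : ∃ c : F, linForm v = p * C c := by
  obtain ⟨k, hk⟩ := h
  by_cases hk0 : k = 0
  · exact ⟨0, by simp [hk, hk0]⟩
  have h1 := totalDegree_linForm_le v
  rw [hk, totalDegree_mul_of_isDomain hp.ne_zero hk0] at h1
  have h2 : p.totalDegree ≠ 0 := by
    intro h0
    rw [totalDegree_eq_zero_iff_eq_C] at h0
    apply hp.not_isUnit
    have hne := hp.ne_zero
    rw [h0] at hne ⊢
    apply IsUnit.map C
    rw [isUnit_iff_ne_zero]
    intro h3
    rw [h3] at hne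
    simp at hne
  have h3 : k.totalDegree = 0 := by omega
  rw [totalDegree_eq_zero_iff_eq_C] at h3
  exact ⟨_, by rw [hk, ← h3]⟩

lemma prop_of_dvd {F : Type*} [Field F] {n : ℕ} {p : MvPolynomial (Fin n) F} (hp : Irreducible p)
    {v w : Fin n → F} (hv : v ≠ 0) (h : p ∣ linForm v) (h' : p ∣ linForm w) :
    ∃ c : F, w = c • v := by
  obtain ⟨c, hc⟩ := const_quot hp h
  obtain ⟨d, hd⟩ := const_quot hp h'
  have hc0 : c ≠ 0 := by
    rintro rfl
    apply hv
    apply linForm_inj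
    simp [hc, linForm_zero]
  refine ⟨d / c, linForm_inj ?_⟩
  rw [linForm_smul, hc, hd]
  have : (C d : MvPolynomial (Fin n) F) = C (d / c) * C c := by
    rw [← C_mul, div_mul_cancel₀ _ hc0]
  rw [this]; ring

lemma eig_lemma {F : Type*} [Field F] [IsAlgClosed F] {n : ℕ} {p R : MvPolynomial (Fin n) F}
    (hp : Prime p) (hR : ¬ p ∣ R) (A : Matrix (Fin n) (Fin n) F)
    (h : ∀ a, eval a p = 0 → eval a R ≠ 0 → ∃ l : F, A.mulVec a = l • a) :
    ∃ l : F, ∀ i, p ∣ linForm ((A - l • 1) i) := by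
  classical
  have hfin : {l | Module.End.HasEigenvalue (Matrix.toLin' A) l}.Finite :=
    Module.End.finite_hasEigenvalue _
  let s : Finset F := insert 0 hfin.toFinset
  by_contra hcon
  push Not at hcon
  choose i hi using hcon
  have key : ∀ q : MvPolynomial (Fin n) F, (∀ a, eval a p = 0 → eval a q = 0) → p ∣ q := by
    intro q hq
    rw [← Ideal.mem_span_singleton]
    have hpr : (Ideal.span {p}).IsPrime := (Ideal.span_singleton_prime hp.ne_zero).2 hp
    rw [← hpr.radical, ← vanishingIdeal_zeroLocus_eq_radical (K := F), mem_vanishingIdeal_iff]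
    intro a ha
    rw [mem_zeroLocus_iff] at ha
    have := ha p (Ideal.mem_span_singleton_self p)
    simpa [aeval_eq_eval] using hq a (by simpa [aeval_eq_eval] using this)
  have h1 : p ∣ R * ∏ l ∈ s, linForm ((A - l • 1) (i l)) := by
    apply key
    intro a ha
    rw [map_mul, map_prod]
    by_cases hRa : eval a R = 0
    · simp [hRa]
    obtain ⟨l, hl⟩ := h a ha hRa
    rw [mul_eq_zero]; right
    have hz : ∀ m : F, A.mulVec a = m • a → eval a (linForm ((A - m • 1) (i m))) = 0 := by
      intro m hm
      have : (A - m • (1 : Matrix (Fin n) (Fin n) F)).mulVec a = 0 := by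
        rw [Matrix.sub_mulVec, Matrix.smul_mulVec, Matrix.one_mulVec, hm, sub_self]
      rw [eval_linForm]
      exact congrFun this (i m)
    by_cases ha0 : a = 0
    · refine Finset.prod_eq_zero (i := 0) (Finset.mem_insert_self _ _) (hz 0 ?_)
      simp [ha0]
    · refine Finset.prod_eq_zero (i := l) (Finset.mem_insert_of_mem ?_) (hz l hl)
      rw [Set.Finite.mem_toFinset]
      exact Module.End.hasEigenvalue_of_hasEigenvector (x := a)
        ⟨Module.End.mem_eigenspace_iff.2 (by simpa using hl), ha0⟩
  rcases hp.dvd_or_dvd h1 with h2 | h2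
  · exact hR h2
  · obtain ⟨l, -, hl⟩ := hp.exists_mem_finset_dvd h2
    exact hi l hl

lemma exists_good {F : Type*} [Field F] {n : ℕ} (hn : 3 ≤ n) (u v f : Fin n → F) :
    ∃ a : Fin n → F, a ∉ Submodule.span F {u, v} ∧ (f ≠ 0 → f ⬝ᵥ a ≠ 0) := by
  classical
  have hx : ∃ x, x ∉ Submodule.span F {u, v} := by
    by_contra! hcon
    have htop : Submodule.span F {u, v} = ⊤ := by
      rw [eq_top_iff]; intro x _; exact hcon x
    have h1 : Module.finrank F (Submodule.span F ({u, v} : Set (Fin n → F))) ≤ 2 := by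
      have := finrank_span_finset_le_card (R := F) ({u, v} : Finset (Fin n → F))
      have h2 := Finset.card_le_two (a := u) (b := v)
      simp only [Finset.coe_insert, Finset.coe_singleton] at this
      exact this.trans h2
    rw [htop, finrank_top] at h1
    simp at h1
    omega
  obtain ⟨x, hx⟩ := hx
  by_cases hf : f = 0
  · exact ⟨x, hx, fun h => absurd hf h⟩
  by_cases hfx : f ⬝ᵥ x = 0
  · obtain ⟨j, hj⟩ := Function.ne_iff.1 hf
    have hy : f ⬝ᵥ (Pi.single j 1) ≠ 0 := by simpa using hj
    by_cases hyW : Pi.single j 1 ∈ Submodule.span F {u, v}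
    · refine ⟨x + Pi.single j 1, fun h => hx ?_, fun _ => ?_⟩
      · simpa using Submodule.sub_mem _ h hyW
      · rw [dotProduct_add, hfx, zero_add]; exact hy
    · exact ⟨_, hyW, fun _ => hy⟩
  · exact ⟨x, hx, fun _ => hfx⟩

lemma final_step {F : Type*} [Field F] {n : ℕ} (hn : 3 ≤ n)
    (A B : Matrix (Fin n) (Fin n) F)
    (hloc : ∀ a : Fin n → F, ∃ α β : F, a = α • A.mulVec a + β • B.mulVec a)
    (l m : F) (u v f : Fin n → F)
    (hA : ∀ i, (A - l • 1) i = u i • f) (hB : ∀ i, (B - m • 1) i = v i • f) :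
    ∃ α β : F, α • A + β • B = 1 := by
  obtain ⟨a, ha, hfa⟩ := exists_good hn u v f
  obtain ⟨α, β, h⟩ := hloc a
  have hA' : A = l • 1 + Matrix.vecMulVec u f := by
    rw [← sub_eq_iff_eq_add']; ext i j; rw [hA]; simp [Matrix.vecMulVec_apply]
  have hB' : B = m • 1 + Matrix.vecMulVec v f := by
    rw [← sub_eq_iff_eq_add']; ext i j; rw [hB]; simp [Matrix.vecMulVec_apply]
  have e1 : ∀ i, a i = (α * l + β * m) * a i + (f ⬝ᵥ a) * (α * u i + β * v i) := by
    intro i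
    have := congrFun h i
    rw [hA', hB'] at this
    simp [Matrix.add_mulVec, Matrix.smul_mulVec, Matrix.vecMulVec_mulVec] at this
    linear_combination this
  have h1 : α * l + β * m = 1 := by
    by_contra hne
    have hne' : 1 - (α * l + β * m) ≠ 0 := fun h => hne (by linear_combination -h)
    apply ha
    rw [Submodule.mem_span_pair]
    refine ⟨(1 - (α * l + β * m))⁻¹ * (f ⬝ᵥ a) * α, (1 - (α * l + β * m))⁻¹ * (f ⬝ᵥ a) * β, ?_⟩
    funext i
    have := e1 i
    simp only [Pi.add_apply, Pi.smul_apply, smul_eq_mul]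
    have e2 : (f ⬝ᵥ a) * (α * u i + β * v i) = (1 - (α * l + β * m)) * a i := by
      linear_combination -this
    calc _ = (1 - (α * l + β * m))⁻¹ * ((f ⬝ᵥ a) * (α * u i + β * v i)) := by ring
      _ = _ := by rw [e2, inv_mul_cancel_left₀ hne']
  refine ⟨α, β, ?_⟩
  have h2 : ∀ i j, (α * u i + β * v i) * f j = 0 := by
    intro i j
    by_cases hf : f = 0
    · simp [hf]
    have := e1 i
    rw [h1, one_mul] at this
    have h3 : (f ⬝ᵥ a) * (α * u i + β * v i) = 0 := by linear_combination -this
    rcases mul_eq_zero.1 h3 with h4 | h4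
    · exact absurd h4 (hfa hf)
    · rw [h4, zero_mul]
  ext i j
  rw [hA', hB']
  simp only [Matrix.add_apply, Matrix.smul_apply, Matrix.vecMulVec_apply, smul_eq_mul]
  linear_combination h2 i j + (1 : Matrix (Fin n) (Fin n) F) i j * h1

lemma core {F : Type*} [Field F] [IsAlgClosed F] {n : ℕ} (hn : 3 ≤ n)
    (A B : Matrix (Fin n) (Fin n) F)
    (hloc : ∀ a : Fin n → F, ∃ α β : F, a = α • A.mulVec a + β • B.mulVec a)
    (hmin : ∃ i j, linForm (A i) * linForm (B j) - linForm (A j) * linForm (B i) ≠ 0) :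
    ∃ α β : F, α • A + β • B = 1 := by
  classical
  have evA : ∀ (M : Matrix (Fin n) (Fin n) F) a i, eval a (linForm (M i)) = M.mulVec a i := by
    intro M a i; rw [eval_linForm]; rfl
  let T : Set (MvPolynomial (Fin n) F) := {D | D ≠ 0 ∧ ∃ P Q, ∀ k,
    D * X k = P * linForm (A k) + Q * linForm (B k)}
  have hT : T.Nonempty := by
    obtain ⟨i, j, hD⟩ := hmin
    refine ⟨_, hD, X i * linForm (B j) - X j * linForm (B i),
      linForm (A i) * X j - linForm (A j) * X i, fun k => ?_⟩
    apply MvPolynomial.funext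
    intro a
    obtain ⟨α, β, h⟩ := hloc a
    have hi := congrFun h i
    have hj := congrFun h j
    have hk := congrFun h k
    simp only [Pi.add_apply, Pi.smul_apply, smul_eq_mul] at hi hj hk
    simp only [map_mul, map_sub, map_add, evA, eval_X]
    rw [hi, hj, hk]; ring
  obtain ⟨D, ⟨hD0, P, Q, hPQ⟩, hDmin⟩ :=
    (IsWellFounded.wf (r := DvdNotUnit (α := MvPolynomial (Fin n) F))).has_min T hT
  by_cases hu : IsUnit D
  · obtain ⟨E, hE⟩ := hu.exists_right_inv
    refine ⟨eval 0 (E * P), eval 0 (E * Q), ?_⟩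
    ext i j
    have h1 : X i = (E * P) * linForm (A i) + (E * Q) * linForm (B i) := by
      linear_combination E * hPQ i - X i * hE
    have h2 := congrArg (fun r => eval 0 (pderiv j r)) h1
    simp only [map_add, Derivation.leibniz, pderiv_linForm, pderiv_X, smul_eq_mul, map_mul,
      eval_C, eval_linForm] at h2
    simp only [Matrix.add_apply, Matrix.smul_apply, smul_eq_mul, Matrix.one_apply, map_mul]
    simp only [Pi.single_apply, Pi.zero_apply, mul_zero, Finset.sum_const_zero, zero_mul,
      add_zero, apply_ite (eval (0 : Fin n → F)), map_one, map_zero] at h2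
    exact h2.symm
  · obtain ⟨p, hp, D', rfl⟩ := WfDvdMonoid.exists_irreducible_factor hu hD0
    have hex : ∃ R, ¬ p ∣ R ∧ ∀ a, eval a p = 0 → eval a R ≠ 0 →
        ∃ l m : F, A.mulVec a = l • a ∧ B.mulVec a = m • a := by
      have hrel : ∀ a, eval a p = 0 → ∀ k,
          eval a P * A.mulVec a k + eval a Q * B.mulVec a k = 0 := by
        intro a ha k
        have := congrArg (eval a) (hPQ k)
        simpa [ha, evA] using this.symm
      have gen : ∀ (s t α β : F) (a x y : Fin n → F), s ≠ 0 → (∀ k, s * x k + t * y k = 0) →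
          a = α • x + β • y → (a = 0 → x = 0 ∧ y = 0) → ∃ l m : F, x = l • a ∧ y = m • a := by
        intro s t α β a x y hs hk ha hz
        have hx : x = (-t / s) • y := by
          funext k
          have := hk k
          simp only [Pi.smul_apply, smul_eq_mul]
          field_simp
          linear_combination this
        have ha' : a = (α * (-t / s) + β) • y := by
          rw [add_smul, mul_smul, ← hx, ← ha]
        by_cases h0 : α * (-t / s) + β = 0
        · obtain ⟨h1, h2⟩ := hz (by rw [ha', h0, zero_smul])
          exact ⟨0, 0, by simp [h1], by simp [h2]⟩
        · have hy : y = (α * (-t / s) + β)⁻¹ • a := by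
            rw [ha', smul_smul, inv_mul_cancel₀ h0, one_smul]
          refine ⟨(-t / s) * (α * (-t / s) + β)⁻¹, _, ?_, hy⟩
          rw [mul_smul, ← hy, ← hx]
      by_cases hpP : p ∣ P
      · by_cases hpQ : p ∣ Q
        · exfalso
          obtain ⟨P', rfl⟩ := hpP
          obtain ⟨Q', rfl⟩ := hpQ
          have hDne : D' ≠ 0 := right_ne_zero_of_mul hD0
          refine hDmin D' ⟨hDne, P', Q', fun k => ?_⟩ ⟨hDne, p, hp.not_isUnit, mul_comm _ _⟩
          apply mul_left_cancel₀ hp.ne_zero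
          linear_combination hPQ k
        · refine ⟨Q, hpQ, fun a ha hR => ?_⟩
          obtain ⟨α, β, h⟩ := hloc a
          obtain ⟨m, l, hm, hl⟩ := gen _ (eval a P) β α a (B.mulVec a) (A.mulVec a) hR
            (fun k => by rw [add_comm]; exact hrel a ha k) (by rw [add_comm]; exact h)
            (fun h => by simp [h])
          exact ⟨l, m, hl, hm⟩
      · refine ⟨P, hpP, fun a ha hR => ?_⟩
        obtain ⟨α, β, h⟩ := hloc a
        exact gen _ (eval a Q) α β a (A.mulVec a) (B.mulVec a) hR (hrel a ha) h
            (fun h => by simp [h])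
    obtain ⟨R, hR, hRa⟩ := hex
    obtain ⟨l, hl⟩ := eig_lemma hp.prime hR A
      (fun a h1 h2 => by obtain ⟨l, m, h, -⟩ := hRa a h1 h2; exact ⟨l, h⟩)
    obtain ⟨m, hm⟩ := eig_lemma hp.prime hR B
      (fun a h1 h2 => by obtain ⟨l, m, -, h⟩ := hRa a h1 h2; exact ⟨m, h⟩)
    have hf : ∃ f : Fin n → F, (∀ i, ∃ c : F, (A - l • 1) i = c • f) ∧
        (∀ i, ∃ c : F, (B - m • 1) i = c • f) := by
      by_cases h : ∃ f : Fin n → F, f ≠ 0 ∧ p ∣ linForm f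
      · obtain ⟨f, hf0, hf⟩ := h
        exact ⟨f, fun i => prop_of_dvd hp hf0 hf (hl i), fun i => prop_of_dvd hp hf0 hf (hm i)⟩
      · push Not at h
        refine ⟨0, fun i => ⟨0, ?_⟩, fun i => ⟨0, ?_⟩⟩
        · by_contra hne
          exact h _ (by simpa using hne) (hl i)
        · by_contra hne
          exact h _ (by simpa using hne) (hm i)
    obtain ⟨f, hfA, hfB⟩ := hf
    choose u hu' using hfA
    choose v hv' using hfB
    exact final_step hn A B hloc l m u v f hu' hv'

theorem stmt_6 (F : Type*) [Field F] [IsAlgClosed F] (n : ℕ) (hn : 3 ≤ n)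
    (hchar : ringChar F = 0 ∨ n < ringChar F)
    (V : Submodule F (Fin n → MvPolynomial (Fin n) F))
    (hS1 : ∀ q ∈ V, ∀ i : Fin n, q i ∈ Submodule.span F
      (Set.range (MvPolynomial.X : Fin n → MvPolynomial (Fin n) F)))
    (hdim : Module.finrank F V = 2)
    (hdimL : Module.finrank (FractionRing (MvPolynomial (Fin n) F))
      (Submodule.span (FractionRing (MvPolynomial (Fin n) F))
        ((fun w : Fin n → MvPolynomial (Fin n) F => fun i =>
          algebraMap (MvPolynomial (Fin n) F) (FractionRing (MvPolynomial (Fin n) F)) (w i)) ''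
            (V : Set (Fin n → MvPolynomial (Fin n) F)))) = 2)
    (hloc : ∀ a : Fin n → F, a ∈ Submodule.span F
      ((fun q : Fin n → MvPolynomial (Fin n) F => fun i => MvPolynomial.eval a (q i)) ''
        (V : Set (Fin n → MvPolynomial (Fin n) F)))) :
    (fun i : Fin n => (MvPolynomial.X i : MvPolynomial (Fin n) F)) ∈ V := by
  classical
  have : Module.Finite F V := Module.finite_of_finrank_pos (by omega)
  let b := Module.finBasisOfFinrankEq F V hdim
  obtain ⟨q₁, hq₁⟩ : ∃ q, q = b 0 := ⟨_, rfl⟩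
  obtain ⟨q₂, hq₂⟩ : ∃ q, q = b 1 := ⟨_, rfl⟩
  have hV : ∀ q ∈ V, ∃ α β : F, q = α • (q₁ : Fin n → MvPolynomial (Fin n) F)
      + β • (q₂ : Fin n → MvPolynomial (Fin n) F) := by
    intro q hq
    refine ⟨b.repr ⟨q, hq⟩ 0, b.repr ⟨q, hq⟩ 1, ?_⟩
    have := congrArg (Subtype.val) (b.sum_repr ⟨q, hq⟩)
    rw [Fin.sum_univ_two, ← hq₁, ← hq₂] at this
    exact this.symm
  obtain ⟨A, hA⟩ : ∃ M : Matrix (Fin n) (Fin n) F,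
      ∀ i, (q₁ : Fin n → MvPolynomial (Fin n) F) i = linForm (M i) := by
    choose M hM using fun i => exists_linForm (hS1 q₁ q₁.2 i)
    exact ⟨M, hM⟩
  obtain ⟨B, hB⟩ : ∃ M : Matrix (Fin n) (Fin n) F,
      ∀ i, (q₂ : Fin n → MvPolynomial (Fin n) F) i = linForm (M i) := by
    choose M hM using fun i => exists_linForm (hS1 q₂ q₂.2 i)
    exact ⟨M, hM⟩
  have evA : ∀ (M : Matrix (Fin n) (Fin n) F) a i, eval a (linForm (M i)) = M.mulVec a i := by
    intro M a i; rw [eval_linForm]; rfl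
  have hloc' : ∀ a : Fin n → F, ∃ α β : F,
      a = α • Matrix.mulVec A a + β • Matrix.mulVec B a := by
    intro a
    have h1 : a ∈ Submodule.span F {Matrix.mulVec A a, Matrix.mulVec B a} := by
      refine Submodule.span_le.2 ?_ (hloc a)
      rintro _ ⟨q, hq, rfl⟩
      obtain ⟨α, β, rfl⟩ := hV q hq
      refine Submodule.mem_span_pair.2 ⟨α, β, ?_⟩
      funext i
      simp [hA, hB, evA, smul_eval]
    obtain ⟨α, β, h⟩ := Submodule.mem_span_pair.1 h1
    exact ⟨α, β, h.symm⟩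
  have hmin : ∃ i j, linForm (A i) * linForm (B j) - linForm (A j) * linForm (B i) ≠ 0 := by
    by_contra! hcon
    let L := FractionRing (MvPolynomial (Fin n) F)
    let ι : MvPolynomial (Fin n) F →+* L := algebraMap _ _
    have hv : ∃ v : Fin n → L, ∃ s t : L, (∀ i, ι (linForm (A i)) = s * v i) ∧
        (∀ i, ι (linForm (B i)) = t * v i) := by
      by_cases h0 : ∃ i, linForm (A i) ≠ 0
      · obtain ⟨i, hi⟩ := h0
        have hi' : ι (linForm (A i)) ≠ 0 := by
          intro h
          exact hi ((IsFractionRing.injective (MvPolynomial (Fin n) F) L) (by rw [map_zero]; exact h))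
        refine ⟨fun j => ι (linForm (A j)), 1, ι (linForm (B i)) / ι (linForm (A i)),
          fun j => (one_mul _).symm, fun j => ?_⟩
        have := congrArg ι (hcon i j)
        rw [map_sub, map_mul, map_mul, map_zero] at this
        rw [div_mul_eq_mul_div, eq_div_iff hi']
        linear_combination this
      · push Not at h0
        exact ⟨fun j => ι (linForm (B j)), 0, 1, fun j => by simp [h0], fun j => (one_mul _).symm⟩
    obtain ⟨v, s, t, hs, ht⟩ := hv
    have hle : Submodule.span L
        ((fun w : Fin n → MvPolynomial (Fin n) F => fun i =>
          algebraMap (MvPolynomial (Fin n) F) L (w i)) ''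
            (V : Set (Fin n → MvPolynomial (Fin n) F))) ≤ Submodule.span L {v} := by
      refine Submodule.span_le.2 ?_
      rintro _ ⟨q, hq, rfl⟩
      obtain ⟨α, β, rfl⟩ := hV q hq
      refine Submodule.mem_span_singleton.2 ⟨ι (C α) * s + ι (C β) * t, ?_⟩
      funext i
      change _ = ι _
      simp only [Pi.add_apply, Pi.smul_apply, smul_eq_mul, smul_eq_C_mul, hA, hB, map_add, map_mul,
        hs, ht]
      ring
    have h1 := Submodule.finrank_mono hle
    have h2 : Module.finrank L (Submodule.span L {v}) ≤ 1 := by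
      have := finrank_span_finset_le_card (R := L) ({v} : Finset (Fin n → L))
      rw [Finset.coe_singleton, Finset.card_singleton] at this
      exact this
    have h3 : 2 ≤ Module.finrank L (Submodule.span L {v}) := hdimL.symm.le.trans h1
    omega
  obtain ⟨α, β, h⟩ := core hn A B hloc' hmin
  have : (fun i : Fin n => (MvPolynomial.X i : MvPolynomial (Fin n) F)) =
      α • (q₁ : Fin n → MvPolynomial (Fin n) F) + β • (q₂ : Fin n → MvPolynomial (Fin n) F) := by
    funext i
    apply MvPolynomial.funext
    intro a
    have h1 := congrFun (congrArg (fun M : Matrix (Fin n) (Fin n) F => M.mulVec a) h) i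
    simp only [Matrix.add_mulVec, Matrix.smul_mulVec, Matrix.one_mulVec, Pi.add_apply,
      Pi.smul_apply, smul_eq_mul] at h1
    simp only [Pi.add_apply, Pi.smul_apply, hA, hB, map_add, smul_eval, evA, eval_X]
    exact h1.symm
  rw [this]
  exact V.add_mem (V.smul_mem _ q₁.2) (V.smul_mem _ q₂.2)
end

section
/- Let n ≥ 4 and let d satisfy 3 ≤ d < n. Set q_1 = ỹ − y_1·e_{n−1}, q_2 = y_1·e_{n−1} − y_2·e_n, q_3 = y_1·e_n in (S_1)^n, and let q_4,…,q_d ∈ (S_1)^n be vectors whose components in positions n−2, n−1, and n are zero (i.e., each q_j for j ≥ 4 lies in the S_1-span of e_1,…,e_{n−3}) and whose images in L^n are L-linearly independent. Let V = Span_F(q_1,…,q_d). Then: (i) the images of q_1,…,q_d in L^n are L-linearly independent, so dim_L(V_L) = d; (ii) V has the ỹ-local membership property; and (iii) ỹ ∉ V. -/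
open MvPolynomial

theorem stmt_8 (F : Type*) [Field F] [IsAlgClosed F] (n : ℕ) (hn : 4 ≤ n)
    (d : ℕ) (hd3 : 3 ≤ d) (hdn : d < n)
    (q : Fin d → (Fin n → MvPolynomial (Fin n) F))
    (hq1 : q ⟨0, by omega⟩ =
      (fun i : Fin n => (MvPolynomial.X i : MvPolynomial (Fin n) F)) -
        (MvPolynomial.X ⟨0, by omega⟩ : MvPolynomial (Fin n) F) •
          (Pi.single (⟨n - 2, by omega⟩ : Fin n) 1 : Fin n → MvPolynomial (Fin n) F))
    (hq2 : q ⟨1, by omega⟩ =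
      (MvPolynomial.X ⟨0, by omega⟩ : MvPolynomial (Fin n) F) •
          (Pi.single (⟨n - 2, by omega⟩ : Fin n) 1 : Fin n → MvPolynomial (Fin n) F) -
        (MvPolynomial.X ⟨1, by omega⟩ : MvPolynomial (Fin n) F) •
          (Pi.single (⟨n - 1, by omega⟩ : Fin n) 1 : Fin n → MvPolynomial (Fin n) F))
    (hq3 : q ⟨2, by omega⟩ =
      (MvPolynomial.X ⟨0, by omega⟩ : MvPolynomial (Fin n) F) •
        (Pi.single (⟨n - 1, by omega⟩ : Fin n) 1 : Fin n → MvPolynomial (Fin n) F))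
    (hS1 : ∀ j : Fin d, 3 ≤ (j : ℕ) → ∀ i : Fin n, q j i ∈ Submodule.span F
      (Set.range (MvPolynomial.X : Fin n → MvPolynomial (Fin n) F)))
    (hzero : ∀ j : Fin d, 3 ≤ (j : ℕ) → ∀ i : Fin n, n - 3 ≤ (i : ℕ) → q j i = 0)
    (hindtail : LinearIndependent (FractionRing (MvPolynomial (Fin n) F))
      (fun j : {j : Fin d // 3 ≤ (j : ℕ)} => fun i : Fin n =>
        algebraMap (MvPolynomial (Fin n) F) (FractionRing (MvPolynomial (Fin n) F)) (q j.1 i))) :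
    (LinearIndependent (FractionRing (MvPolynomial (Fin n) F))
      (fun j : Fin d => fun i : Fin n =>
        algebraMap (MvPolynomial (Fin n) F) (FractionRing (MvPolynomial (Fin n) F)) (q j i))) ∧
    (Module.finrank (FractionRing (MvPolynomial (Fin n) F))
      (Submodule.span (FractionRing (MvPolynomial (Fin n) F))
        ((fun w : Fin n → MvPolynomial (Fin n) F => fun i =>
          algebraMap (MvPolynomial (Fin n) F) (FractionRing (MvPolynomial (Fin n) F)) (w i)) ''
            ((Submodule.span F (Set.range q) : Submodule F (Fin n → MvPolynomial (Fin n) F)) :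
              Set (Fin n → MvPolynomial (Fin n) F)))) = d) ∧
    (∀ a : Fin n → F, a ∈ Submodule.span F
      ((fun w : Fin n → MvPolynomial (Fin n) F => fun i => MvPolynomial.eval a (w i)) ''
        ((Submodule.span F (Set.range q) : Submodule F (Fin n → MvPolynomial (Fin n) F)) :
          Set (Fin n → MvPolynomial (Fin n) F)))) ∧
    (fun i : Fin n => (MvPolynomial.X i : MvPolynomial (Fin n) F)) ∉
      Submodule.span F (Set.range q) := by
  obtain ⟨m, rfl⟩ : ∃ m, d = m + 3 := ⟨d - 3, by omega⟩
  have hqa : q 0 = _ := hq1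
  have hqb : q (Fin.succ 0) = _ := hq2
  have hqc : q (Fin.succ (Fin.succ 0)) = _ := hq3
  have hz : ∀ (k : Fin m) (i : Fin n), n - 3 ≤ (i : ℕ) → q k.succ.succ.succ i = 0 :=
    fun k i hi => hzero _ (by simp) i hi
  have n1 : (⟨n - 3, by omega⟩ : Fin n) ≠ ⟨n - 2, by omega⟩ := by
    simp only [ne_eq, Fin.mk.injEq]; omega
  have n2 : (⟨n - 3, by omega⟩ : Fin n) ≠ ⟨n - 1, by omega⟩ := by
    simp only [ne_eq, Fin.mk.injEq]; omega
  have n3 : (⟨n - 2, by omega⟩ : Fin n) ≠ ⟨n - 1, by omega⟩ := by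
    simp only [ne_eq, Fin.mk.injEq]; omega
  have hLI : LinearIndependent (FractionRing (MvPolynomial (Fin n) F))
      (fun j : Fin (m + 3) => fun i : Fin n =>
        algebraMap (MvPolynomial (Fin n) F) (FractionRing (MvPolynomial (Fin n) F)) (q j i)) := by
    have hX : ∀ i : Fin n, algebraMap (MvPolynomial (Fin n) F)
        (FractionRing (MvPolynomial (Fin n) F)) (X i) ≠ 0 := by
      intro i
      rw [ne_eq, FaithfulSMul.algebraMap_eq_zero_iff]
      exact X_ne_zero i
    rw [Fintype.linearIndependent_iff]
    intro c hc
    have htail := hindtail.comp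
      (fun k : Fin m => (⟨k.succ.succ.succ, by simp⟩ : {j : Fin (m + 3) // 3 ≤ (j : ℕ)}))
      (by intro a b h; simpa using h)
    rw [Fintype.linearIndependent_iff] at htail
    have hcoord : ∀ i : Fin n, n - 3 ≤ (i : ℕ) → _ := fun i hi => by
      have h := congrFun hc i
      simp only [Fin.sum_univ_succ, Pi.add_apply, Pi.smul_apply, Finset.sum_apply, hz _ i hi,
        map_zero, smul_zero, Finset.sum_const_zero, add_zero, hqa, hqb, hqc, Pi.zero_apply] at h
      exact h
    have h1 := hcoord ⟨n - 3, by omega⟩ le_rfl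
    have h2 := hcoord ⟨n - 2, by omega⟩ (by simp only; omega)
    have h3 := hcoord ⟨n - 1, by omega⟩ (by simp only; omega)
    have c0 : c 0 = 0 := by
      simpa [n1, n2, n3, hX] using h1
    have c1 : c (Fin.succ 0) = 0 := by
      simpa [n1, n2, n3, n3.symm, hX, c0, -Fin.succ_zero_eq_one] using h2
    have c2 : c (Fin.succ (Fin.succ 0)) = 0 := by
      rw [c0, c1] at h3
      simpa [n1, n2, n3, n3.symm, hX, -Fin.succ_zero_eq_one,
        -Fin.succ_one_eq_two] using h3
    have hk := htail (fun k => c k.succ.succ.succ) (by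
      rw [Fin.sum_univ_succ, Fin.sum_univ_succ, Fin.sum_univ_succ, c0, c1, c2] at hc
      simpa using hc)
    intro j
    refine Fin.cases c0 (fun j => Fin.cases c1 (fun j => Fin.cases c2 (fun j => hk j) j) j) j
  refine ⟨hLI, ?_, ?_, ?_⟩
  · have h := finrank_span_eq_card hLI
    rw [Fintype.card_fin] at h
    refine Eq.trans ?_ h
    have : Submodule.span (FractionRing (MvPolynomial (Fin n) F))
        ((fun w : Fin n → MvPolynomial (Fin n) F => fun i =>
          algebraMap (MvPolynomial (Fin n) F) (FractionRing (MvPolynomial (Fin n) F)) (w i)) ''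
            ((Submodule.span F (Set.range q) : Submodule F (Fin n → MvPolynomial (Fin n) F)) :
              Set (Fin n → MvPolynomial (Fin n) F))) =
        Submodule.span (FractionRing (MvPolynomial (Fin n) F)) (Set.range
      (fun j : Fin (m + 3) => fun i : Fin n =>
        algebraMap (MvPolynomial (Fin n) F) (FractionRing (MvPolynomial (Fin n) F)) (q j i))) := by
      apply le_antisymm
      · rw [Submodule.span_le]
        rintro _ ⟨w, hw, rfl⟩
        rw [SetLike.mem_coe]
        induction hw using Submodule.span_induction with
        | mem x hx =>
          obtain ⟨j, rfl⟩ := hx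
          exact Submodule.subset_span ⟨j, rfl⟩
        | zero =>
          convert Submodule.zero_mem (Submodule.span (FractionRing (MvPolynomial (Fin n) F))
            (Set.range (fun j : Fin (m + 3) => fun i : Fin n =>
              algebraMap (MvPolynomial (Fin n) F)
                (FractionRing (MvPolynomial (Fin n) F)) (q j i)))) using 1
          ext i
          simp
        | add x y _ _ hx hy =>
          convert Submodule.add_mem _ hx hy using 1
          ext i
          simp
        | smul a x _ hx =>
          convert Submodule.smul_mem _ (algebraMap (MvPolynomial (Fin n) F)
            (FractionRing (MvPolynomial (Fin n) F)) (C a)) hx using 1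
          ext i
          simp [MvPolynomial.smul_eq_C_mul]
      · rw [Submodule.span_le]
        rintro _ ⟨j, rfl⟩
        exact Submodule.subset_span ⟨q j, Submodule.subset_span ⟨j, rfl⟩, rfl⟩
    rw [this]
  · intro a
    have hm : ∀ j, (fun i => MvPolynomial.eval a (q j i)) ∈ Submodule.span F
      ((fun w : Fin n → MvPolynomial (Fin n) F => fun i => MvPolynomial.eval a (w i)) ''
        ((Submodule.span F (Set.range q) : Submodule F (Fin n → MvPolynomial (Fin n) F)) :
          Set (Fin n → MvPolynomial (Fin n) F))) := fun j =>
      Submodule.subset_span ⟨q j, Submodule.subset_span ⟨j, rfl⟩, rfl⟩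
    have m0 := hm 0
    have m1 := hm (Fin.succ 0)
    have m2 := hm (Fin.succ (Fin.succ 0))
    rw [hqa] at m0
    rw [hqb] at m1
    rw [hqc] at m2
    by_cases ha : a ⟨0, by omega⟩ = 0
    · convert m0 using 1
      ext i
      simp [ha]
    · convert Submodule.add_mem _ (Submodule.add_mem _ m0 m1)
        (Submodule.smul_mem _ (a ⟨1, by omega⟩ / a ⟨0, by omega⟩) m2) using 1
      ext i
      simp only [Pi.add_apply, Pi.sub_apply, Pi.smul_apply, smul_eq_mul, map_sub, map_mul, eval_X]
      field_simp
      ring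
  · intro h
    rw [Submodule.mem_span_range_iff_exists_fun] at h
    obtain ⟨c, hc⟩ := h
    have hcoord : ∀ i : Fin n, n - 3 ≤ (i : ℕ) → _ := fun i hi => by
      have h := congrFun hc i
      simp only [Fin.sum_univ_succ, Pi.add_apply, Pi.smul_apply, Finset.sum_apply, hz _ i hi,
        smul_zero, Finset.sum_const_zero, add_zero, hqa, hqb, hqc] at h
      exact h
    have h1 := congrArg (eval (fun _ => (1 : F))) (hcoord ⟨n - 3, by omega⟩ le_rfl)
    have h2 := congrArg (eval (fun _ => (1 : F)))
      (hcoord ⟨n - 2, by omega⟩ (by simp only; omega))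
    have h3 := congrArg (eval (Pi.single (⟨1, by omega⟩ : Fin n) (1 : F)))
      (hcoord ⟨n - 1, by omega⟩ (by simp only; omega))
    have n4 : (⟨n - 1, by omega⟩ : Fin n) ≠ ⟨1, by omega⟩ := by
      simp only [ne_eq, Fin.mk.injEq]; omega
    have n5 : (⟨0, by omega⟩ : Fin n) ≠ ⟨1, by omega⟩ := by
      simp only [ne_eq, Fin.mk.injEq]; omega
    simp only [Pi.sub_apply, Pi.smul_apply, smul_eq_mul, map_add, map_sub, map_mul, eval_X,
      smul_eval, Pi.single_eq_same, Pi.single_eq_of_ne n1, Pi.single_eq_of_ne n2,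
      Pi.single_eq_of_ne n3, Pi.single_eq_of_ne n3.symm, Pi.single_eq_of_ne n4,
      Pi.single_eq_of_ne n5, map_one, map_zero] at h1 h2 h3
    have e2 : c (Fin.succ 0) = 1 := by linear_combination h2
    rw [e2] at h3
    exact one_ne_zero (by linear_combination -h3 : (1 : F) = 0)
end

section
/- Let q_1,…,q_{n−1} ∈ (S_1)^n have L-linearly independent images in L^n. Let C ∈ M_n(S) be the matrix whose first n−1 columns are q_1,…,q_{n−1} and whose last column is ỹ, and write C = y_1·A_1 + y_2·A_2 + ⋯ + y_n·A_n with A_1,…,A_n ∈ M_n(F) (each entry of C is a linear form, and A_j records the coefficients of y_j). Then ỹ lies in the F-span of q_1,…,q_{n−1} in S^n if and only if there exists a maximal left ideal I of M_n(F) (i.e., a left submodule of M_n(F), viewed as a left module over itself, that is maximal among proper left submodules) such that A_j ∈ I for all j = 1,…,n. -/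
open MvPolynomial

/-- A proper left ideal of the matrix ring kills a nonzero vector. -/
theorem exists_vec_of_proper {F : Type*} [Field F] {n : ℕ}
    (I : Submodule (Matrix (Fin n) (Fin n) F) (Matrix (Fin n) (Fin n) F)) (hI : I ≠ ⊤) :
    ∃ v : Fin n → F, v ≠ 0 ∧ ∀ M ∈ I, M.mulVec v = 0 := by
  classical
  let W : Submodule F (Fin n → F) :=
    { carrier := {r | ∀ i, Matrix.vecMulVec (Pi.single i (1 : F)) r ∈ I}
      add_mem' := by
        intro a b ha hb i
        rw [Matrix.vecMulVec_add]
        exact I.add_mem (ha i) (hb i)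
      zero_mem' := by
        intro i
        rw [Matrix.vecMulVec_zero]
        exact I.zero_mem
      smul_mem' := by
        intro c r hr i
        have h := I.smul_mem (Matrix.scalar (Fin n) c) (hr i)
        convert h using 1
        ext a b
        simp [Matrix.vecMulVec_apply, mul_left_comm] }
  have hW : W ≠ ⊤ := by
    intro h
    apply hI
    have h1 : (1 : Matrix (Fin n) (Fin n) F) ∈ I := by
      have h2 : (1 : Matrix (Fin n) (Fin n) F) =
          ∑ i, Matrix.vecMulVec (Pi.single i (1 : F)) (Pi.single i (1 : F)) := by
        ext a b
        simp [Matrix.sum_apply, Matrix.vecMulVec_apply, Matrix.one_apply, Pi.single_apply]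
      rw [h2]
      refine I.sum_mem fun i _ => ?_
      have h3 : (Pi.single i (1 : F)) ∈ W := h ▸ Submodule.mem_top
      exact h3 i
    rw [eq_top_iff]
    intro M _
    simpa using I.smul_mem M h1
  obtain ⟨f, hf0, hf⟩ := Submodule.exists_le_ker_of_lt_top W (lt_top_iff_ne_top.2 hW)
  have hfe : ∀ r : Fin n → F, f r = ∑ j, r j * f (Pi.single j 1) := by
    intro r
    rw [LinearMap.pi_apply_eq_sum_univ f r]
    refine Finset.sum_congr rfl fun j _ => ?_
    rw [smul_eq_mul]
    congr 2
    ext k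
    simp [Pi.single_apply, eq_comm]
  refine ⟨fun j => f (Pi.single j 1), ?_, ?_⟩
  · intro h
    apply hf0
    ext r
    simpa using congrFun h r
  · intro M hM
    ext k
    have hk : M k ∈ W := by
      intro i
      have h := I.smul_mem (Matrix.single i k (1 : F)) hM
      convert h using 1
      ext a b
      by_cases hai : a = i
      · subst hai
        simp [Matrix.vecMulVec_apply]
      · simp [Matrix.vecMulVec_apply, hai]
    have := hf hk
    rw [LinearMap.mem_ker, hfe] at this
    simpa [Matrix.mulVec, dotProduct] using this

/-- The annihilator of a nonzero vector is a maximal left ideal. -/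
theorem exists_coatom_of_vec {F : Type*} [Field F] {n : ℕ} (v : Fin n → F) (hv : v ≠ 0) :
    ∃ I : Submodule (Matrix (Fin n) (Fin n) F) (Matrix (Fin n) (Fin n) F),
      IsCoatom I ∧ ∀ M, M.mulVec v = 0 → M ∈ I := by
  classical
  let I : Submodule (Matrix (Fin n) (Fin n) F) (Matrix (Fin n) (Fin n) F) :=
    { carrier := {M | M.mulVec v = 0}
      add_mem' := by
        intro a b ha hb
        simp only [Set.mem_ofPred_eq] at *
        rw [Matrix.add_mulVec, ha, hb, add_zero]
      zero_mem' := by simp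
      smul_mem' := by
        intro c r hr
        simp only [Set.mem_ofPred_eq] at *
        rw [smul_eq_mul, ← Matrix.mulVec_mulVec, hr, Matrix.mulVec_zero] }
  refine ⟨I, ⟨?_, ?_⟩, fun M h => h⟩
  · intro h
    have h1 : (1 : Matrix (Fin n) (Fin n) F) ∈ I := h ▸ Submodule.mem_top
    apply hv
    have h2 : (1 : Matrix (Fin n) (Fin n) F).mulVec v = 0 := h1
    simpa using h2
  · intro J hJ
    obtain ⟨M, hMJ, hMI⟩ := Set.exists_of_ssubset hJ
    have hMv : M.mulVec v ≠ 0 := hMI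
    obtain ⟨k, hk⟩ := Function.ne_iff.1 hMv
    rw [eq_top_iff]
    intro N _
    let P : Matrix (Fin n) (Fin n) F :=
      Matrix.vecMulVec (N.mulVec v) (Pi.single k (M.mulVec v k)⁻¹)
    have hP : P.mulVec (M.mulVec v) = N.mulVec v := by
      ext a
      have hk' : M.mulVec v k ≠ 0 := hk
      rw [Matrix.vecMulVec_mulVec]
      simp [hk']
    have h1 : N - P * M ∈ I := by
      change (N - P * M).mulVec v = 0
      rw [Matrix.sub_mulVec, ← Matrix.mulVec_mulVec, hP, sub_self]
    have h2 := J.add_mem (hJ.le h1) (J.smul_mem P hMJ)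
    simpa using h2

theorem coeff_lin {F : Type*} [Field F] {n : ℕ} (a : Fin n → F) :
    ∑ t, MvPolynomial.C (a t) * (MvPolynomial.X t : MvPolynomial (Fin n) F) = 0 ↔ a = 0 := by
  classical
  constructor
  · intro h
    ext s
    have := congrArg (MvPolynomial.coeff (Finsupp.single s 1)) h
    simpa [MvPolynomial.coeff_sum, MvPolynomial.coeff_C_mul, MvPolynomial.coeff_X,
      Finsupp.single_left_inj] using this
  · rintro rfl
    simp

theorem stmt_9 (F : Type*) [Field F] [IsAlgClosed F] (n : ℕ) (hn : 3 ≤ n)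
    (q : Fin (n - 1) → (Fin n → MvPolynomial (Fin n) F))
    (hS1 : ∀ j : Fin (n - 1), ∀ i : Fin n, q j i ∈ Submodule.span F
      (Set.range (MvPolynomial.X : Fin n → MvPolynomial (Fin n) F)))
    (hind : LinearIndependent (FractionRing (MvPolynomial (Fin n) F))
      (fun j : Fin (n - 1) => fun i : Fin n =>
        algebraMap (MvPolynomial (Fin n) F) (FractionRing (MvPolynomial (Fin n) F)) (q j i)))
    (C : Matrix (Fin n) (Fin n) (MvPolynomial (Fin n) F))
    (hC : C = Matrix.of fun i j : Fin n =>
      if hj : (j : ℕ) < n - 1 then q ⟨j, hj⟩ i else MvPolynomial.X i)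
    (A : Fin n → Matrix (Fin n) (Fin n) F)
    (hA : ∀ i j : Fin n, C i j =
      ∑ t : Fin n, MvPolynomial.C (A t i j) * MvPolynomial.X t) :
    (∃ α : Fin (n - 1) → F,
      (fun i : Fin n => (MvPolynomial.X i : MvPolynomial (Fin n) F)) =
        ∑ j : Fin (n - 1), α j • q j) ↔
    (∃ I : Submodule (Matrix (Fin n) (Fin n) F) (Matrix (Fin n) (Fin n) F),
      IsCoatom I ∧ ∀ t : Fin n, A t ∈ I) := by
  obtain ⟨m, rfl⟩ : ∃ m, n = m + 1 := ⟨n - 1, by omega⟩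
  have key : ∀ v : Fin (m + 1) → F, (∀ t, (A t).mulVec v = 0) ↔
      ∀ i, (∑ j : Fin m, v j.castSucc • q j i) +
        v (Fin.last m) • (MvPolynomial.X i : MvPolynomial (Fin (m + 1)) F) = 0 := by
    intro v
    have h1 : ∀ i, (∑ j : Fin m, v j.castSucc • q j i) +
        v (Fin.last m) • (MvPolynomial.X i : MvPolynomial (Fin (m + 1)) F) =
        ∑ t, MvPolynomial.C ((A t).mulVec v i) * MvPolynomial.X t := by
      intro i
      have h2 : ∑ j, v j • C i j = (∑ j : Fin m, v j.castSucc • q j i) +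
          v (Fin.last m) • (MvPolynomial.X i : MvPolynomial (Fin (m + 1)) F) := by
        rw [Fin.sum_univ_castSucc, hC]
        simp
      rw [← h2]
      simp only [hA, Matrix.mulVec, dotProduct, map_sum, map_mul, Finset.sum_mul,
        Finset.smul_sum, MvPolynomial.smul_eq_C_mul]
      rw [Finset.sum_comm]
      refine Finset.sum_congr rfl fun t _ => Finset.sum_congr rfl fun j _ => ?_
      ring
    simp only [h1, coeff_lin]
    constructor
    · intro h i
      ext t
      exact congrFun (h t) i
    · intro h t
      ext i
      exact congrFun (h i) t
  constructor
  · rintro ⟨α, hα⟩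
    let v : Fin (m + 1) → F := Fin.snoc (α := fun _ => F) α (-1)
    have hv : v ≠ 0 := by
      intro h
      have := congrFun h (Fin.last m)
      simp [v] at this
    obtain ⟨I, hI, hI'⟩ := exists_coatom_of_vec v hv
    refine ⟨I, hI, fun t => hI' _ ((key v).2 ?_ t)⟩
    intro i
    have h := congrFun hα i
    simp only [Finset.sum_apply, Pi.smul_apply] at h
    simp only [v, Fin.snoc_castSucc, Fin.snoc_last]
    rw [neg_smul, one_smul, ← sub_eq_add_neg, sub_eq_zero]
    exact h.symm
  · rintro ⟨I, hI, hAI⟩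
    obtain ⟨v, hv, hvI⟩ := exists_vec_of_proper I hI.1
    have h := (key v).1 fun t => hvI _ (hAI t)
    have hl : v (Fin.last m) ≠ 0 := by
      intro h0
      apply hv
      simp only [h0, zero_smul, add_zero] at h
      have h3 := Fintype.linearIndependent_iff.1 hind
        (fun j : Fin m => algebraMap (MvPolynomial (Fin (m + 1)) F)
          (FractionRing (MvPolynomial (Fin (m + 1)) F)) (MvPolynomial.C (v j.castSucc))) (by
          ext i
          have h4 := congrArg (algebraMap (MvPolynomial (Fin (m + 1)) F)
            (FractionRing (MvPolynomial (Fin (m + 1)) F))) (h i)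
          simp only [MvPolynomial.smul_eq_C_mul, map_sum, map_mul, map_zero] at h4
          simp only [Finset.sum_apply, Pi.smul_apply, smul_eq_mul, Pi.zero_apply]
          exact h4)
      ext j
      refine Fin.lastCases h0 (fun j => ?_) j
      have h5 := h3 j
      rw [← map_zero (algebraMap (MvPolynomial (Fin (m + 1)) F)
          (FractionRing (MvPolynomial (Fin (m + 1)) F)))] at h5
      have h6 := IsFractionRing.injective (MvPolynomial (Fin (m + 1)) F)
          (FractionRing (MvPolynomial (Fin (m + 1)) F)) h5
      simpa using h6
    refine ⟨fun j : Fin m => -(v (Fin.last m))⁻¹ * v j.castSucc, ?_⟩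
    ext1 i
    have h7 := congrArg (fun p => (v (Fin.last m))⁻¹ • p) (h i)
    simp only [smul_add, smul_smul, inv_mul_cancel₀ hl, one_smul, smul_zero, Finset.smul_sum] at h7
    simp only [Finset.sum_apply, Pi.smul_apply, Pi.neg_apply, neg_mul, neg_smul, Finset.sum_neg_distrib]
    exact eq_neg_of_add_eq_zero_right h7
end

section
/- Let q_1,…,q_{n−1} ∈ (S_1)^n have L-linearly independent images in L^n, and assume the image of ỹ in L^n lies in the L-span of the images of q_1,…,q_{n−1}. Let C ∈ M_n(S) be the matrix whose first n−1 columns are q_1,…,q_{n−1} and whose last column is ỹ, and write C = y_1·A_1 + ⋯ + y_n·A_n with A_1,…,A_n ∈ M_n(F). Then det(C) = 0 in S, and det(A_j) = 0 in F for every j = 1,…,n; moreover, for every j the last column of A_j is the standard basis vector e_j of F^n. -/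
open MvPolynomial

theorem stmt_10 (F : Type*) [Field F] [IsAlgClosed F] (n : ℕ) (hn : 3 ≤ n)
    (q : Fin (n - 1) → (Fin n → MvPolynomial (Fin n) F))
    (hS1 : ∀ j : Fin (n - 1), ∀ i : Fin n, q j i ∈ Submodule.span F
      (Set.range (MvPolynomial.X : Fin n → MvPolynomial (Fin n) F)))
    (hind : LinearIndependent (FractionRing (MvPolynomial (Fin n) F))
      (fun j : Fin (n - 1) => fun i : Fin n =>
        algebraMap (MvPolynomial (Fin n) F) (FractionRing (MvPolynomial (Fin n) F)) (q j i)))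
    (hy : (fun i : Fin n =>
        algebraMap (MvPolynomial (Fin n) F) (FractionRing (MvPolynomial (Fin n) F))
          (MvPolynomial.X i)) ∈
      Submodule.span (FractionRing (MvPolynomial (Fin n) F))
        (Set.range (fun j : Fin (n - 1) => fun i : Fin n =>
          algebraMap (MvPolynomial (Fin n) F) (FractionRing (MvPolynomial (Fin n) F)) (q j i))))
    (C : Matrix (Fin n) (Fin n) (MvPolynomial (Fin n) F))
    (hC : C = Matrix.of fun i j : Fin n =>
      if hj : (j : ℕ) < n - 1 then q ⟨j, hj⟩ i else MvPolynomial.X i)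
    (A : Fin n → Matrix (Fin n) (Fin n) F)
    (hA : ∀ i j : Fin n, C i j =
      ∑ t : Fin n, MvPolynomial.C (A t i j) * MvPolynomial.X t) :
    C.det = 0 ∧
    (∀ t : Fin n, (A t).det = 0) ∧
    (∀ t i : Fin n, A t i ⟨n - 1, by omega⟩ = if i = t then 1 else 0) := by
  have hE : ∀ t i j, A t i j = MvPolynomial.eval (Pi.single t (1 : F)) (C i j) := by
    intro t i j
    rw [hA, map_sum, Finset.sum_eq_single t]
    · simp
    · intro b _ hb
      simp [hb]
    · simp
  have hdet : C.det = 0 := by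
    set φ := algebraMap (MvPolynomial (Fin n) F) (FractionRing (MvPolynomial (Fin n) F)) with hφ
    have hinj : Function.Injective φ := IsFractionRing.injective _ _
    apply hinj
    rw [map_zero, RingHom.map_det]
    by_contra hne
    have hli : LinearIndependent (FractionRing (MvPolynomial (Fin n) F)) (φ.mapMatrix C).col :=
      Matrix.linearIndependent_cols_iff_isUnit.mpr
        ((Matrix.isUnit_iff_isUnit_det _).mpr (isUnit_iff_ne_zero.mpr hne))
    have hns := hli.notMem_span_image (s := {j | (j : ℕ) < n - 1}) (x := ⟨n - 1, by omega⟩)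
      (by simp)
    apply hns
    have hcol : (φ.mapMatrix C).col ⟨n - 1, by omega⟩ = fun i => φ (MvPolynomial.X i) := by
      funext i
      simp [hC, Matrix.col]
    rw [hcol]
    refine Submodule.span_mono ?_ hy
    rintro _ ⟨j, rfl⟩
    refine ⟨⟨j, by omega⟩, j.2, ?_⟩
    funext i
    simp [hC, Matrix.col]
  refine ⟨hdet, ?_, ?_⟩
  · intro t
    have h : A t = (MvPolynomial.eval (Pi.single t (1 : F))).mapMatrix C := by
      ext i j
      exact hE t i j
    rw [h, ← RingHom.map_det, hdet, map_zero]
  · intro t i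
    rw [hE, hC]
    simp [Pi.single_apply]
end

section
/- Let V ⊆ (S_1)^n be an F-subspace of dimension d < n. Define V♭ = {b ∈ M_n(F) : b·ỹ ∈ V}, where b·ỹ ∈ (S_1)^n is the matrix-vector product of b with the vector ỹ of variables, and let (V♭)^⊥ = {a ∈ M_n(F) : Tr(ab) = 0 for all b ∈ V♭} be its orthogonal complement with respect to the trace form. Then V has the ỹ-local membership property if and only if (V♭)^⊥ contains no rank-1 idempotent (i.e., no e ∈ M_n(F) with e² = e and rank e = 1). -/
open MvPolynomial

theorem aux_trace {F : Type*} [Field F] {n : ℕ} (a c : Fin n → F) (b : Matrix (Fin n) (Fin n) F) :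
    Matrix.trace (Matrix.vecMulVec a c * b) = ∑ i, c i * ∑ j, b i j * a j := by
  rw [Matrix.vecMulVec_mul, Matrix.trace_vecMulVec]
  simp only [dotProduct, Matrix.vecMul, Finset.mul_sum]
  rw [Finset.sum_comm]
  refine Finset.sum_congr rfl fun i _ => Finset.sum_congr rfl fun j _ => by ring

theorem aux_rank {F : Type*} [Field F] {n : ℕ} (e : Matrix (Fin n) (Fin n) F) (h : e.rank = 1) :
    ∃ a c : Fin n → F, e = Matrix.vecMulVec a c := by
  obtain ⟨v, -, hv⟩ := finrank_eq_one_iff'.1 h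
  choose c hc using fun j : Fin n =>
    hv ⟨e.mulVecLin (Pi.single j 1), LinearMap.mem_range_self _ _⟩
  refine ⟨v.1, c, ?_⟩
  ext i j
  have := congrFun (congrArg Subtype.val (hc j)) i
  simp at this
  rw [Matrix.vecMulVec_apply, mul_comm]
  exact this.symm

theorem stmt_11 (F : Type*) [Field F] [IsAlgClosed F] (n : ℕ) (hn : 3 ≤ n)
    (d : ℕ) (hdn : d < n)
    (V : Submodule F (Fin n → MvPolynomial (Fin n) F))
    (hS1 : ∀ q ∈ V, ∀ i : Fin n, q i ∈ Submodule.span F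
      (Set.range (MvPolynomial.X : Fin n → MvPolynomial (Fin n) F)))
    (hdim : Module.finrank F V = d) :
    (∀ a : Fin n → F, a ∈ Submodule.span F
      ((fun q : Fin n → MvPolynomial (Fin n) F => fun i => MvPolynomial.eval a (q i)) ''
        (V : Set (Fin n → MvPolynomial (Fin n) F)))) ↔
    ¬ ∃ e : Matrix (Fin n) (Fin n) F,
        e * e = e ∧ e.rank = 1 ∧
        ∀ b : Matrix (Fin n) (Fin n) F,
          (fun i : Fin n => ∑ j : Fin n, MvPolynomial.C (b i j) * MvPolynomial.X j) ∈ V →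
          Matrix.trace (e * b) = 0 := by
  constructor
  · rintro h ⟨e, he, hr, ht⟩
    obtain ⟨a, c, rfl⟩ := aux_rank e hr
    have hle : Submodule.span F
      ((fun q : Fin n → MvPolynomial (Fin n) F => fun i => MvPolynomial.eval a (q i)) ''
        (V : Set (Fin n → MvPolynomial (Fin n) F))) ≤
        LinearMap.ker (dotProductBilin F F c) := by
      rw [Submodule.span_le]
      rintro _ ⟨q, hq, rfl⟩
      choose b hb using fun i => (Submodule.mem_span_range_iff_exists_fun F).1 (hS1 q hq i)
      have hqe : q = fun i => ∑ j, C (b i j) * X j := by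
        funext i
        rw [← hb i]
        simp [MvPolynomial.smul_eq_C_mul]
      have := ht (Matrix.of b) (by simpa [← hqe] using hq)
      rw [aux_trace] at this
      rw [hqe]
      simpa [dotProduct] using this
    have h0 := hle (h a)
    simp only [LinearMap.mem_ker, dotProductBilin_apply_apply] at h0
    rw [Matrix.vecMulVec_mul_vecMulVec, h0] at he
    simp at he
    rw [← he] at hr
    simp at hr
  · intro h a
    by_contra ha
    obtain ⟨f, hf, hle⟩ := Submodule.exists_le_ker_of_notMem ha
    apply h
    let c : Fin n → F := fun i => (f a)⁻¹ * f (Pi.single i 1)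
    have hc : ∀ x, ∑ i, c i * x i = (f a)⁻¹ * f x := by
      intro x
      rw [LinearMap.pi_apply_eq_sum_univ f x, Finset.mul_sum]
      refine Finset.sum_congr rfl fun i _ => ?_
      have : (fun j => if i = j then (1 : F) else 0) = Pi.single i 1 := by
        funext j; simp [Pi.single_apply, eq_comm]
      rw [this]
      simp only [c, smul_eq_mul]
      ring
    have hca : c ⬝ᵥ a = 1 := by
      rw [dotProduct, hc, inv_mul_cancel₀ hf]
    refine ⟨Matrix.vecMulVec a c, ?_, ?_, ?_⟩
    · rw [Matrix.vecMulVec_mul_vecMulVec, hca, one_smul]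
    · refine le_antisymm (Matrix.rank_vecMulVec_le _ _) ?_
      rw [Nat.one_le_iff_ne_zero]
      intro h0
      have h1 := LinearMap.range_eq_bot.1 (Submodule.finrank_eq_zero.1 h0)
      have h2 := LinearMap.congr_fun h1 a
      rw [Matrix.mulVecLin_apply, Matrix.vecMulVec_mulVec, hca] at h2
      simp at h2
      rw [h2] at hf
      simp at hf
    · intro b hb
      rw [aux_trace, hc]
      have : f (fun i => ∑ j, b i j * a j) = 0 := by
        apply LinearMap.mem_ker.1
        apply hle
        apply Submodule.subset_span
        exact ⟨_, hb, by simp⟩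
      rw [this, mul_zero]
end

section
/- Assume n ≥ 3 and that char(F) = 0 or char(F) > n. Let W ⊆ M_n(F) be an F-subspace of codimension 1 or codimension 2 (as a subspace of the n²-dimensional space M_n(F)) that contains no rank-1 idempotent. Then W is contained in the subspace of trace-zero matrices, i.e., Tr(a) = 0 for every a ∈ W. -/
section Helpers

variable {F V : Type*} [Field F] [AddCommGroup V] [Module F V]

/-- kernel of `c` is contained in the kernel of `d`. -/
lemma aux_ker (c d : V →ₗ[F] V) (v0 : V) (hv0 : v0 ≠ 0) (hc0 : c v0 = 0) (hd0 : d v0 = 0)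
    (H : ∀ v, ∃ α β : F, v = α • (v + d v) + β • c v) (w : V) (hw : c w = 0) : d w = 0 := by
  obtain ⟨α, β, h1⟩ := H w
  obtain ⟨α', β', h2⟩ := H (v0 + w)
  rw [map_add, map_add, hc0, hd0, hw] at h2
  rw [hw] at h1
  by_contra hne
  have hα : α ≠ 0 := by
    rintro rfl
    apply hne
    have : w = 0 := by rw [h1]; simp
    rw [this, map_zero]
  have hα' : α' ≠ 0 := by
    rintro rfl
    apply hne
    have : w = - v0 := by
      have : v0 + w = 0 := by rw [h2]; simp
      linear_combination (norm := module) this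
    rw [this, map_neg, hd0, neg_zero]
  -- d w = k w
  obtain ⟨k, hk⟩ : ∃ k : F, d w = k • w := by
    refine ⟨(1 - α) / α, ?_⟩
    have : α • d w = (1 - α) • w := by linear_combination (norm := module) -h1
    rw [div_eq_inv_mul, mul_smul, ← this, smul_smul, inv_mul_cancel₀ hα, one_smul]
  obtain ⟨k', hk'⟩ : ∃ k : F, d w = k • (v0 + w) := by
    refine ⟨(1 - α') / α', ?_⟩
    have : α' • d w = (1 - α') • (v0 + w) := by linear_combination (norm := module) -h2
    rw [div_eq_inv_mul, mul_smul, ← this, smul_smul, inv_mul_cancel₀ hα', one_smul]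
  have hk'0 : k' ≠ 0 := by
    rintro rfl
    exact hne (by simpa using hk')
  have hv : v0 = (k'⁻¹ * (k - k')) • w := by
    have : k' • v0 = (k - k') • w := by linear_combination (norm := module) hk - hk'
    rw [mul_smul, ← this, smul_smul, inv_mul_cancel₀ hk'0, one_smul]
  have hz : k' • d v0 = (k - k') • d w := by
    rw [← map_smul, ← map_smul]
    congr 1
    linear_combination (norm := module) hk - hk'
  rw [hd0, smul_zero] at hz
  rcases smul_eq_zero.1 hz.symm with h | h
  · apply hv0; rw [hv, h]; simp
  · exact hne h

/-- facts at a vector `u` such that `c u`, `d u` are independent. -/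
lemma aux_good (c d : V →ₗ[F] V) (v0 : V) (hv0 : v0 ≠ 0) (hc0 : c v0 = 0) (hd0 : d v0 = 0)
    (H : ∀ v, ∃ α β : F, v = α • (v + d v) + β • c v) (u : V)
    (hg : ∀ x y : F, x • d u + y • c u = 0 → x = 0 ∧ y = 0) :
    (∃ p q : F, u = p • d u + q • c u) ∧
    (∀ w, c w = 0 → ∃ p q : F, w = p • d u + q • c u) ∧
    (∃ s : F, s ≠ 0 ∧ v0 = s • c u) := by
  have key : ∀ w, c w = 0 → ∃ p q : F, w + u = p • d u + q • c u := by
    intro w hw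
    have hdw := aux_ker c d v0 hv0 hc0 hd0 H w hw
    obtain ⟨α, β, h⟩ := H (w + u)
    rw [map_add, map_add, hw, hdw, zero_add, zero_add] at h
    have hα : 1 - α ≠ 0 := by
      intro hα
      have h1 : α = 1 := by linear_combination -hα
      subst h1
      have := hg 1 β (by linear_combination (norm := module) -h)
      exact one_ne_zero this.1
    refine ⟨(1 - α)⁻¹ * α, (1 - α)⁻¹ * β, ?_⟩
    have : (1 - α) • (w + u) = α • d u + β • c u := by linear_combination (norm := module) h
    rw [mul_smul, mul_smul, ← smul_add, ← this, smul_smul, inv_mul_cancel₀ hα, one_smul]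
  obtain ⟨p, q, hu⟩ := key 0 (map_zero c)
  rw [zero_add] at hu
  have key2 : ∀ w, c w = 0 → ∃ p q : F, w = p • d u + q • c u := by
    intro w hw
    obtain ⟨p', q', h⟩ := key w hw
    exact ⟨p' - p, q' - q, by linear_combination (norm := module) h - hu⟩
  refine ⟨⟨p, q, hu⟩, key2, ?_⟩
  obtain ⟨r, s, h0⟩ := key2 v0 hc0
  have hr : r = 0 := by
    by_contra hr
    obtain ⟨α, β, h⟩ := H (u + (-(p + 1) / r) • v0)
    simp only [map_add, map_smul, hc0, hd0, smul_zero, add_zero] at h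
    set x := -(p + 1) / r with hx
    have hxr : x * r = -(p + 1) := by rw [hx]; field_simp
    -- u + x v0 = -d u + (q + x s) c u
    have e1 : u + x • v0 = (-1 : F) • d u + (q + x * s) • c u := by
      have e2 : u + x • v0 = (p + x * r) • d u + (q + x * s) • c u := by
        linear_combination (norm := module) hu + x • h0
      rw [hxr] at e2
      rw [e2]; congr 2; ring
    have := hg (-1) (q + x * s - α * (q + x * s) - β) (by
      linear_combination (norm := module) h - e1 + α • e1)
    exact one_ne_zero (neg_eq_zero.1 this.1)
  subst hr
  rw [zero_smul, zero_add] at h0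
  refine ⟨s, ?_, h0⟩
  rintro rfl
  exact hv0 (by simpa using h0)

lemma core0 [Infinite F] [FiniteDimensional F V] (hdim : 3 ≤ Module.finrank F V)
    (c d : V →ₗ[F] V) (v0 : V) (hv0 : v0 ≠ 0) (hc0 : c v0 = 0) (hd0 : d v0 = 0)
    (H : ∀ v, ∃ α β : F, v = α • (v + d v) + β • c v) : ∃ l : F, ∀ u, d u = l • c u := by
  classical
  have hker := aux_ker c d v0 hv0 hc0 hd0 H
  -- dependency at bad vectors
  have hbad : ∀ u, ¬ (∀ x y : F, x • d u + y • c u = 0 → x = 0 ∧ y = 0) →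
      ∃ l : F, d u = l • c u := by
    intro u hu
    push Not at hu
    obtain ⟨x, y, hxy, hne⟩ := hu
    by_cases hx : x = 0
    · subst hx
      have : c u = 0 := by
        have h3 : y = 0 ∨ c u = 0 := by simpa using hxy
        exact h3.resolve_left (hne rfl)
      exact ⟨0, by rw [hker u this, zero_smul]⟩
    · refine ⟨-(x⁻¹ * y), ?_⟩
      have : x • d u = -(y • c u) := by linear_combination (norm := module) hxy
      rw [neg_smul, mul_smul, ← smul_neg, ← this, smul_smul, inv_mul_cancel₀ hx, one_smul]
  have hall : ∀ u, ∃ l : F, d u = l • c u := by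
    intro u
    apply hbad
    intro hg
    obtain ⟨⟨p, q, hu⟩, hk, s, hs, hv⟩ := aux_good c d v0 hv0 hc0 hd0 H u hg
    -- vector outside the plane
    obtain ⟨u', hu'⟩ : ∃ u', u' ∉ Submodule.span F {d u, c u} := by
      by_contra hcon
      push Not at hcon
      have htop : Submodule.span F {d u, c u} = ⊤ := by
        rw [eq_top_iff]; intro x _; exact hcon x
      have h1 := finrank_span_finset_le_card (R := F) ({d u, c u} : Finset V)
      rw [Finset.coe_pair, Set.finrank, htop, finrank_top] at h1
      have h2 : ({d u, c u} : Finset V).card ≤ 2 := Finset.card_le_two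
      omega
    have hmem : ∀ w, (∃ p q : F, w = p • d u + q • c u) → w ∈ Submodule.span F {d u, c u} := by
      rintro w ⟨p, q, rfl⟩
      exact Submodule.mem_span_pair.2 ⟨p, q, rfl⟩
    have hum := hmem u ⟨p, q, hu⟩
    have hb2 : ∀ w, w ∉ Submodule.span F {d u, c u} → ∃ l : F, d w = l • c w := by
      intro w hw
      apply hbad
      intro hgw
      obtain ⟨-, -, s', hs', hv'⟩ := aux_good c d v0 hv0 hc0 hd0 H w hgw
      have h1 : c (s' • w - s • u) = 0 := by
        rw [map_sub, map_smul, map_smul, ← hv, ← hv', sub_self]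
      have h2 := hmem _ (hk _ h1)
      have h3 : s' • w ∈ Submodule.span F {d u, c u} := by
        have := Submodule.add_mem _ h2 (Submodule.smul_mem _ s hum)
        simpa using this
      exact hw ((Submodule.smul_mem_iff _ hs').1 h3)
    have hb3 : ∀ t : F, ∃ l : F, d (u' + t • u) = l • c (u' + t • u) := by
      intro t
      apply hb2
      intro h
      exact hu' ((Submodule.add_mem_iff_left _ (Submodule.smul_mem _ t hum)).1 h)
    obtain ⟨a, ha⟩ := hb2 u' hu'
    obtain ⟨t, ht⟩ := Infinite.exists_notMem_finset ({0, 1} : Finset F)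
    simp only [Finset.mem_insert, Finset.mem_singleton, not_or] at ht
    obtain ⟨a1, h1⟩ := hb3 1
    obtain ⟨a2, h2⟩ := hb3 t
    simp only [map_add, map_smul, one_smul] at h1 h2
    have e1 : (a - a1) • c u' = a1 • c u - d u := by linear_combination (norm := module) h1 - ha
    have e2 : (a - a2) • c u' = (t * a2) • c u - t • d u := by
      linear_combination (norm := module) h2 - ha
    have hγ : a - a1 ≠ 0 := by
      intro h
      rw [h, zero_smul] at e1
      have := hg 1 (-a1) (by linear_combination (norm := module) e1)
      exact one_ne_zero this.1
    obtain ⟨g1, g2⟩ := hg ((a - a1) * t - (a - a2)) ((a - a2) * a1 - (a - a1) * (t * a2)) (by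
      linear_combination (norm := module) (a - a1) • e2 - (a - a2) • e1)
    have g3 : ((a - a1) * t) * (a1 - a2) = 0 := by linear_combination g2 + a1 * g1
    have g4 : a1 - a2 = 0 := (mul_eq_zero.1 g3).resolve_left (mul_ne_zero hγ ht.1)
    have g5 : (a - a1) * (t - 1) = 0 := by linear_combination g1 + g4
    rcases mul_eq_zero.1 g5 with h | h
    · exact hγ h
    · exact ht.2 (sub_eq_zero.1 h)
  by_cases hc : ∀ u, c u = 0
  · exact ⟨0, fun u => by rw [hker u (hc u), zero_smul]⟩
  push Not at hc
  obtain ⟨u0, hu0⟩ := hc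
  obtain ⟨l, hl⟩ := hall u0
  refine ⟨l, fun u => ?_⟩
  obtain ⟨m, hm⟩ := hall u
  obtain ⟨k, hk⟩ := hall (u + u0)
  rw [map_add, map_add] at hk
  have e : (m - k) • c u = (k - l) • c u0 := by linear_combination (norm := module) hk - hm - hl
  by_cases hmk : m - k = 0
  · rw [hmk, zero_smul] at e
    have : k - l = 0 := (smul_eq_zero.1 e.symm).resolve_right hu0
    rw [hm, sub_eq_zero.1 hmk, sub_eq_zero.1 this]
  · have hz : c ((m - k) • u - (k - l) • u0) = 0 := by
      rw [map_sub, map_smul, map_smul, e, sub_self]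
    have hz2 := hker _ hz
    rw [map_sub, map_smul, map_smul] at hz2
    have : (m - k) • (d u - l • c u) = 0 := by
      linear_combination (norm := module) hz2 - l • e + (k - l) • hl
    exact sub_eq_zero.1 ((smul_eq_zero.1 this).resolve_left hmk)

lemma core1 [Infinite F] [FiniteDimensional F V] (hdim : 3 ≤ Module.finrank F V)
    (b c : V →ₗ[F] V) (v0 : V) (hv0 : v0 ≠ 0) (hc0 : c v0 = 0)
    (H : ∀ v, ∃ α β : F, v = α • b v + β • c v) :
    ∃ α β : F, ∀ v, v = α • b v + β • c v := by
  obtain ⟨k, k', hk⟩ := H v0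
  rw [hc0, smul_zero, add_zero] at hk
  have hk0 : k ≠ 0 := by
    rintro rfl
    exact hv0 (by simpa using hk)
  obtain ⟨l, hl⟩ := core0 hdim c (k • b - LinearMap.id) v0 hv0 hc0
    (by simp [← hk]) (by
      intro v
      obtain ⟨α, β, h⟩ := H v
      refine ⟨α / k, β, ?_⟩
      simp only [LinearMap.sub_apply, LinearMap.smul_apply, LinearMap.id_apply,
        add_sub_cancel, smul_smul, div_mul_cancel₀ _ hk0]
      exact h)
  refine ⟨k, -l, fun v => ?_⟩
  have := hl v
  simp only [LinearMap.sub_apply, LinearMap.smul_apply, LinearMap.id_apply] at this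
  linear_combination (norm := module) -this

lemma core2 [IsAlgClosed F] [FiniteDimensional F V] (hdim : 3 ≤ Module.finrank F V)
    (b c : V →ₗ[F] V)
    (H : ∀ v, ∃ α β : F, v = α • b v + β • c v) :
    ∃ α β : F, ∀ v, v = α • b v + β • c v := by
  have : Infinite F := IsAlgClosed.instInfinite
  by_cases hc : ∃ v0, v0 ≠ 0 ∧ c v0 = 0
  · obtain ⟨v0, hv0, hc0⟩ := hc
    exact core1 hdim b c v0 hv0 hc0 H
  · have hinj : Function.Injective c := by
      rw [injective_iff_map_eq_zero]
      intro a ha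
      by_contra h
      exact hc ⟨a, h, ha⟩
    let e := LinearEquiv.ofInjectiveEndo c hinj
    have : Nontrivial V := Module.nontrivial_of_finrank_pos (R := F) (by omega)
    obtain ⟨μ, hμ⟩ := Module.End.exists_eigenvalue (e.symm.toLinearMap ∘ₗ b)
    obtain ⟨v0, hv⟩ := hμ.exists_hasEigenvector
    have h1 : b v0 = μ • c v0 := by
      have := hv.apply_eq_smul
      have h2 := congrArg e this
      simpa [e] using h2
    obtain ⟨α, β, h⟩ := core1 hdim c (b - μ • c) v0 hv.2 (by simp [h1]) (by
      intro v
      obtain ⟨α, β, h⟩ := H v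
      refine ⟨β + α * μ, α, ?_⟩
      simp only [LinearMap.sub_apply, LinearMap.smul_apply]
      linear_combination (norm := module) h)
    refine ⟨β, α - β * μ, fun v => ?_⟩
    have := h v
    simp only [LinearMap.sub_apply, LinearMap.smul_apply] at this
    linear_combination (norm := module) this

/-- A subspace of codimension 1 or 2 is the common kernel of two functionals. -/
lemma exists_two (W : Submodule F V) (hcodim : Module.finrank F (V ⧸ W) = 1 ∨
      Module.finrank F (V ⧸ W) = 2) :
    ∃ φ ψ : V →ₗ[F] F, ∀ a, a ∈ W ↔ φ a = 0 ∧ ψ a = 0 := by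
  rcases hcodim with h | h
  · have : Module.Finite F (V ⧸ W) := Module.finite_of_finrank_pos (by omega)
    let B := Module.finBasisOfFinrankEq F (V ⧸ W) h
    refine ⟨B.coord 0 ∘ₗ W.mkQ, B.coord 0 ∘ₗ W.mkQ, fun a => ?_⟩
    rw [← Submodule.Quotient.mk_eq_zero, ← B.forall_coord_eq_zero_iff]
    simp
  · have : Module.Finite F (V ⧸ W) := Module.finite_of_finrank_pos (by omega)
    let B := Module.finBasisOfFinrankEq F (V ⧸ W) h
    refine ⟨B.coord 0 ∘ₗ W.mkQ, B.coord 1 ∘ₗ W.mkQ, fun a => ?_⟩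
    rw [← Submodule.Quotient.mk_eq_zero, ← B.forall_coord_eq_zero_iff]
    simp [Fin.forall_fin_two]

/-- A functional on matrices is given by a matrix. -/
lemma functional_apply {n : ℕ} (φ : Matrix (Fin n) (Fin n) F →ₗ[F] F)
    (A : Matrix (Fin n) (Fin n) F) :
    φ A = ∑ i, ∑ j, A i j * φ (Matrix.single i j 1) := by
  conv_lhs => rw [Matrix.matrix_eq_sum_single A]
  simp only [map_sum]
  refine Finset.sum_congr rfl fun i _ => Finset.sum_congr rfl fun j _ => ?_
  rw [← smul_eq_mul, ← map_smul, Matrix.smul_single, smul_eq_mul, mul_one]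

end Helpers

theorem stmt_12 (F : Type*) [Field F] [IsAlgClosed F] (n : ℕ) (hn : 3 ≤ n)
    (hchar : ringChar F = 0 ∨ n < ringChar F)
    (W : Submodule F (Matrix (Fin n) (Fin n) F))
    (hcodim : Module.finrank F (Matrix (Fin n) (Fin n) F ⧸ W) = 1 ∨
      Module.finrank F (Matrix (Fin n) (Fin n) F ⧸ W) = 2)
    (hr1 : ¬ ∃ e ∈ W, e * e = e ∧ e.rank = 1) :
    ∀ a ∈ W, Matrix.trace a = 0 := by
  obtain ⟨φ, ψ, hW⟩ := exists_two W hcodim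
  let M : (Matrix (Fin n) (Fin n) F →ₗ[F] F) → Matrix (Fin n) (Fin n) F :=
    fun φ => Matrix.of fun j i => φ (Matrix.single i j 1)
  have hM : ∀ (φ : Matrix (Fin n) (Fin n) F →ₗ[F] F) (v w : Fin n → F),
      φ (Matrix.vecMulVec v w) = w ⬝ᵥ (M φ).mulVec v := by
    intro φ v w
    rw [functional_apply, Finset.sum_comm]
    simp only [dotProduct, Matrix.mulVec, Matrix.vecMulVec_apply, M, Matrix.of_apply,
      Finset.mul_sum]
    refine Finset.sum_congr rfl fun i _ => Finset.sum_congr rfl fun j _ => ?_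
    ring
  have H : ∀ v : Fin n → F, ∃ α β : F,
      v = α • (M φ).mulVecLin v + β • (M ψ).mulVecLin v := by
    intro v
    by_contra hcon
    have hv : v ∉ Submodule.span F {(M φ).mulVecLin v, (M ψ).mulVecLin v} := by
      intro h
      obtain ⟨α, β, h⟩ := Submodule.mem_span_pair.1 h
      exact hcon ⟨α, β, h.symm⟩
    obtain ⟨f, hf, hle⟩ := Submodule.exists_le_ker_of_notMem hv
    have h1 : f ((M φ).mulVecLin v) = 0 := hle (Submodule.subset_span (by simp))
    have h2 : f ((M ψ).mulVecLin v) = 0 := hle (Submodule.subset_span (by simp))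
    let w : Fin n → F := fun i => (f v)⁻¹ * f (Pi.single i 1)
    have hw : ∀ x, w ⬝ᵥ x = (f v)⁻¹ * f x := by
      intro x
      conv_rhs => rw [LinearMap.pi_apply_eq_sum_univ f x]
      simp only [dotProduct, w, Finset.mul_sum, smul_eq_mul]
      refine Finset.sum_congr rfl fun i _ => ?_
      have : (fun j => if i = j then (1 : F) else 0) = Pi.single i 1 := by
        ext j; simp [Pi.single_apply, eq_comm]
      rw [this]; ring
    have hwv : w ⬝ᵥ v = 1 := by rw [hw, inv_mul_cancel₀ hf]
    apply hr1
    have hidem : Matrix.vecMulVec v w * Matrix.vecMulVec v w = Matrix.vecMulVec v w := by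
      rw [Matrix.vecMulVec_mul_vecMulVec, hwv, one_smul]
    refine ⟨Matrix.vecMulVec v w, ?_, hidem, ?_⟩
    · rw [hW, hM, hM, hw, hw]
      simp only [Matrix.mulVecLin_apply] at h1 h2
      simp [h1, h2]
    · apply le_antisymm (Matrix.rank_vecMulVec_le v w)
      rw [Nat.one_le_iff_ne_zero]
      intro h0
      have h0 : Matrix.vecMulVec v w = 0 := by
        rw [Matrix.rank, Submodule.finrank_eq_zero, LinearMap.range_eq_bot] at h0
        apply Matrix.toLin'.injective
        rw [map_zero, Matrix.toLin'_apply', h0]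
      have : Matrix.trace (Matrix.vecMulVec v w) = 1 := by
        rw [Matrix.trace_vecMulVec, dotProduct_comm, hwv]
      rw [h0, Matrix.trace_zero] at this
      exact zero_ne_one this
  obtain ⟨α, β, h⟩ := core2 (by simpa using hn) _ _ H
  have hlin : ∀ i j, α * φ (Matrix.single i j 1) + β * ψ (Matrix.single i j 1)
      = if i = j then 1 else 0 := by
    intro i j
    have := congrFun (h (Pi.single i 1)) j
    simp [M, Pi.single_apply] at this
    rw [← this]
    simp [eq_comm]
  intro a ha
  obtain ⟨ha1, ha2⟩ := (hW a).1 ha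
  have : Matrix.trace a = α * φ a + β * ψ a := by
    rw [functional_apply φ, functional_apply ψ, Finset.mul_sum, Finset.mul_sum,
      ← Finset.sum_add_distrib]
    simp only [Matrix.trace, Matrix.diag]
    refine Finset.sum_congr rfl fun i _ => ?_
    rw [Finset.mul_sum, Finset.mul_sum, ← Finset.sum_add_distrib]
    have : ∀ j, α * (a i j * φ (Matrix.single i j 1)) + β * (a i j * ψ (Matrix.single i j 1))
        = a i j * if i = j then 1 else 0 := by
      intro j; rw [← hlin i j]; ring
    simp [this]
  rw [this, ha1, ha2]; simp
end

section
/- Assume n ≥ 4 and that char(F) = 0 or char(F) > n. Then for every d with 3 ≤ d < n, there exists an F-subspace W ⊆ M_n(F) of codimension d (as a subspace of the n²-dimensional space M_n(F)) such that W contains no rank-1 idempotent and W is not contained in the subspace of trace-zero matrices, i.e., there exists a ∈ W with Tr(a) ≠ 0. -/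
theorem stmt_13 (F : Type*) [Field F] [IsAlgClosed F] (n : ℕ) (hn : 4 ≤ n)
    (hchar : ringChar F = 0 ∨ n < ringChar F) :
    ∀ d : ℕ, 3 ≤ d → d < n →
      ∃ W : Submodule F (Matrix (Fin n) (Fin n) F),
        Module.finrank F (Matrix (Fin n) (Fin n) F ⧸ W) = d ∧
        (¬ ∃ e ∈ W, e * e = e ∧ e.rank = 1) ∧
        ∃ a ∈ W, Matrix.trace a ≠ 0 := by
  intro d hd hdn
  let i0 : Fin n := ⟨0, by omega⟩
  let i1 : Fin n := ⟨1, by omega⟩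
  let i2 : Fin n := ⟨2, by omega⟩
  let i3 : Fin n := ⟨3, by omega⟩
  let L : Matrix (Fin n) (Fin n) F →ₗ[F] (Fin d → F) :=
    { toFun := fun a i => if i.val = 0 then a.trace + a i1 i2
        else a i0 ⟨i.val + 1, by omega⟩ + (if i.val = 2 then a.trace else 0)
      map_add' := by
        intro a b
        ext i
        simp only [Matrix.trace_add, Matrix.add_apply, Pi.add_apply]
        split_ifs <;> ring
      map_smul' := by
        intro c a
        ext i
        simp only [Matrix.trace_smul, Matrix.smul_apply, Pi.smul_apply, smul_eq_mul,
          RingHom.id_apply]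
        split_ifs <;> ring }
  have hL : ∀ a i, L a i = if i.val = 0 then a.trace + a i1 i2
        else a i0 ⟨i.val + 1, by omega⟩ + (if i.val = 2 then a.trace else 0) := fun _ _ => rfl
  have hsurj : Function.Surjective L := by
    intro f
    let a : Matrix (Fin n) (Fin n) F := Matrix.of fun i j =>
      if i.val = 1 ∧ j.val = 2 then f ⟨0, by omega⟩
      else if h : i.val = 0 ∧ 2 ≤ j.val ∧ j.val ≤ d then f ⟨j.val - 1, by omega⟩ else 0
    have htr : a.trace = 0 := by
      unfold Matrix.trace
      refine Finset.sum_eq_zero fun i _ => ?_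
      simp only [Matrix.diag_apply, a, Matrix.of_apply]
      rw [if_neg (by omega), dif_neg (by omega)]
    refine ⟨a, ?_⟩
    ext ⟨i, hi⟩
    rw [hL, htr]
    by_cases h0 : i = 0
    · subst h0
      simp [a, i1, i2]
    · simp only [h0, if_false, a, Matrix.of_apply, i0]
      rw [if_neg (by simp), dif_pos ⟨trivial, by omega, by omega⟩]
      simp
  refine ⟨LinearMap.ker L, ?_, ?_, ?_⟩
  · rw [(L.quotKerEquivOfSurjective hsurj).finrank_eq]
    simp
  · rintro ⟨e, heW, hee, hr⟩
    rw [LinearMap.mem_ker] at heW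
    have h0 := congrFun heW ⟨0, by omega⟩
    have h1 := congrFun heW ⟨1, by omega⟩
    have h2 := congrFun heW ⟨2, by omega⟩
    rw [hL] at h0 h1 h2
    simp at h0 h1 h2
    obtain ⟨⟨u, hu⟩, hu0, huspan⟩ := finrank_eq_one_iff'.1 (show Module.finrank F
      (LinearMap.range e.mulVecLin) = 1 from hr)
    have hcol : ∀ j, ∃ c : F, ∀ i, e i j = c * u i := by
      intro j
      obtain ⟨c, hc⟩ := huspan ⟨e.mulVecLin (Pi.single j 1), LinearMap.mem_range_self _ _⟩
      refine ⟨c, fun i => ?_⟩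
      have := congrFun (congrArg Subtype.val hc) i
      simpa using this.symm
    choose v hv using hcol
    have hne : e ≠ 0 := by
      rintro rfl
      simp at hr
    have htr : e.trace = 1 := by
      have hsq : e * e = e.trace • e := by
        ext i j
        simp only [Matrix.mul_apply, Matrix.trace, Matrix.diag_apply, Matrix.smul_apply,
          smul_eq_mul, hv, Finset.sum_mul]
        exact Finset.sum_congr rfl fun k _ => by ring
      rw [hee] at hsq
      have h' : (e.trace - 1) • e = 0 := by rw [sub_smul, ← hsq, one_smul, sub_self]
      rcases smul_eq_zero.1 h' with h | h
      · exact sub_eq_zero.1 h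
      · exact absurd h hne
    have hmin : e i0 i3 * e i1 i2 = e i0 i2 * e i1 i3 := by
      rw [hv, hv, hv, hv]
      ring
    have h02 : e i0 i2 = 0 := h1
    have h03 : e i0 i3 + e.trace = 0 := h2
    rw [htr] at h03 h0
    rw [h02, eq_neg_of_add_eq_zero_left h03, eq_neg_of_add_eq_zero_right h0] at hmin
    simp at hmin
  · refine ⟨Matrix.single i0 i0 1 - Matrix.single i0 i3 1 - Matrix.single i1 i2 1, ?_, ?_⟩
    · rw [LinearMap.mem_ker]
      ext ⟨i, hi⟩
      rw [hL]
      have hv : i = 0 ∨ i = 2 ∨ (i ≠ 0 ∧ i ≠ 2) := by omega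
      rcases hv with rfl | rfl | ⟨h0, h2⟩
      · simp [Matrix.trace_single_eq_of_ne, Matrix.single_apply, i0, i1, i2, i3]
      · simp [Matrix.trace_single_eq_of_ne, Matrix.single_apply, i0, i1, i2, i3]
      · simp [Matrix.single_apply, i0, i1, i2, i3, h0, h2, Ne.symm h2]
    · simp [Matrix.trace_single_eq_of_ne, i0, i1, i2, i3]
end

section
/- Assume char(F) = 0 or char(F) > n. Let H = {a ∈ M_n(F) : Tr(a) = 0} be the subspace of trace-zero matrices. Then H contains no nonzero idempotent, and H is the unique F-subspace of M_n(F) of codimension 1 containing no nonzero idempotent: if W ⊆ M_n(F) is a subspace of codimension 1 such that no nonzero e ∈ W satisfies e² = e, then W = H. -/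
theorem aux_part1 (F : Type*) [Field F] (n : ℕ)
    (hchar : ringChar F = 0 ∨ n < ringChar F)
    (e : Matrix (Fin n) (Fin n) F) (ht : Matrix.trace e = 0) (he : e * e = e) : e = 0 := by
  have hid : IsIdempotentElem (Matrix.toLin' e) := by
    change _ * _ = _
    rw [Module.End.mul_eq_comp, ← Matrix.toLin'_mul, he]
  have h1 := (LinearMap.IsIdempotentElem.isProj_range _ hid).trace
  rw [Matrix.trace_toLin'_eq, ht] at h1
  have hle : Module.finrank F (LinearMap.range (Matrix.toLin' e)) ≤ n := by
    simpa using Submodule.finrank_le (LinearMap.range (Matrix.toLin' e))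
  have hdvd := (ringChar.spec F _).1 h1.symm
  have h0 : Module.finrank F (LinearMap.range (Matrix.toLin' e)) = 0 := by
    rcases hchar with h | h
    · rw [h] at hdvd
      exact Nat.eq_zero_of_zero_dvd hdvd
    · exact Nat.eq_zero_of_dvd_of_lt hdvd (by omega)
  rw [Submodule.finrank_eq_zero, LinearMap.range_eq_bot] at h0
  simpa using h0

theorem aux_dual (F : Type*) [Field F] (n : ℕ)
    (φ : Matrix (Fin n) (Fin n) F →ₗ[F] F) :
    ∃ b : Matrix (Fin n) (Fin n) F, ∀ x, φ x = Matrix.trace (b * x) := by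
  refine ⟨Matrix.of fun i j => φ (Matrix.single j i 1), fun x => ?_⟩
  conv_lhs => rw [Matrix.matrix_eq_sum_single x]
  simp only [map_sum, Matrix.trace, Matrix.diag, Matrix.mul_apply, Matrix.of_apply]
  rw [Finset.sum_comm]
  refine Finset.sum_congr rfl fun i _ => Finset.sum_congr rfl fun j _ => ?_
  have : Matrix.single j i (x j i) = x j i • Matrix.single j i (1 : F) := by
    simp [Matrix.smul_single]
  rw [this, map_smul, smul_eq_mul, mul_comm]

theorem aux_vec (F : Type*) [Field F] (n : ℕ) (v u : Fin n → F)
    (h : LinearIndependent F ![v, u]) :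
    ∃ w : Fin n → F, v ⬝ᵥ w = 1 ∧ u ⬝ᵥ w = 0 := by
  have hv : v ∉ Submodule.span F {u} := by
    intro hm
    obtain ⟨a, ha⟩ := Submodule.mem_span_singleton.1 hm
    have := LinearIndependent.pair_iff.1 h 1 (-a) (by simp [← ha])
    simp at this
  obtain ⟨f, hfv, hf⟩ := Submodule.exists_le_ker_of_notMem hv
  have hfu : f u = 0 := hf (Submodule.mem_span_singleton_self u)
  have key : ∀ x : Fin n → F, x ⬝ᵥ (fun i => f (Pi.single i 1) * (f v)⁻¹) = f x * (f v)⁻¹ := by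
    intro x
    conv_rhs => rw [LinearMap.pi_apply_eq_sum_univ f x]
    simp only [dotProduct, Finset.sum_mul, smul_eq_mul, mul_assoc]
    refine Finset.sum_congr rfl fun i _ => ?_
    congr 3
    ext j
    simp [Pi.single_apply, eq_comm]
  refine ⟨_, (key v).trans (mul_inv_cancel₀ hfv), (key u).trans (by simp [hfu])⟩

theorem stmt_14 (F : Type*) [Field F] [IsAlgClosed F] (n : ℕ) (hn : 1 ≤ n)
    (hchar : ringChar F = 0 ∨ n < ringChar F) :
    (∀ e : Matrix (Fin n) (Fin n) F, Matrix.trace e = 0 → e * e = e → e = 0) ∧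
    (∀ W : Submodule F (Matrix (Fin n) (Fin n) F),
      Module.finrank F (Matrix (Fin n) (Fin n) F ⧸ W) = 1 →
      (∀ e ∈ W, e * e = e → e = 0) →
      W = LinearMap.ker (Matrix.traceLinearMap (Fin n) F F)) := by
  refine ⟨fun e ht he => aux_part1 F n hchar e ht he, fun W hW hid => ?_⟩
  let E : (Matrix (Fin n) (Fin n) F ⧸ W) ≃ₗ[F] F :=
    LinearEquiv.ofFinrankEq _ _ (by rw [hW, Module.finrank_self])
  obtain ⟨b, hb⟩ := aux_dual F n (E.toLinearMap ∘ₗ W.mkQ)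
  have hmem : ∀ x, x ∈ W ↔ Matrix.trace (b * x) = 0 := by
    intro x
    rw [← hb]
    simp
  have hsc : ∃ a : F, Matrix.toLin' b = a • 1 := by
    apply LinearMap.exists_eq_smul_id_of_forall_notLinearIndependent
    intro v hv
    obtain ⟨w, h1, h2⟩ := aux_vec F n _ _ hv
    have h3 := hid (Matrix.vecMulVec v w) (by
      rw [hmem, Matrix.mul_vecMulVec, Matrix.trace_vecMulVec]
      simpa using h2) (by
      rw [Matrix.vecMulVec_mul_vecMulVec, dotProduct_comm, h1, one_smul])
    have h4 := congrArg Matrix.trace h3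
    rw [Matrix.trace_vecMulVec, h1] at h4
    simp at h4
  obtain ⟨a, ha⟩ := hsc
  have hb' : b = a • 1 := by
    apply Matrix.toLin'.injective
    rw [ha, map_smul, Matrix.toLin'_one]
    rfl
  have ha0 : a ≠ 0 := by
    rintro rfl
    have htop : W = ⊤ := by
      rw [Submodule.eq_top_iff']
      intro x
      rw [hmem, hb']
      simp
    have : Subsingleton (Matrix (Fin n) (Fin n) F ⧸ W) :=
      Submodule.Quotient.subsingleton_iff.2 htop
    rw [Module.finrank_zero_of_subsingleton] at hW
    omega
  ext x
  rw [hmem, hb']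
  simp [ha0]
end

section
/- Assume char(F) = p with 0 < p ≤ n. Then every F-subspace W ⊆ M_n(F) of codimension 1 contains a nonzero idempotent, i.e., there exists e ∈ W with e ≠ 0 and e² = e. -/
theorem stmt_15 (F : Type*) [Field F] [IsAlgClosed F] (n : ℕ) (hn : 1 ≤ n)
    (p : ℕ) (hp : CharP F p) (hp0 : 0 < p) (hpn : p ≤ n)
    (W : Submodule F (Matrix (Fin n) (Fin n) F))
    (hcodim : Module.finrank F (Matrix (Fin n) (Fin n) F ⧸ W) = 1) :
    ∃ e ∈ W, e ≠ 0 ∧ e * e = e := by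
  obtain ⟨φ⟩ : Nonempty ((Matrix (Fin n) (Fin n) F ⧸ W) ≃ₗ[F] F) :=
    FiniteDimensional.nonempty_linearEquiv_of_finrank_eq (by rw [hcodim, Module.finrank_self])
  obtain ⟨f, hf⟩ : ∃ f : Matrix (Fin n) (Fin n) F →ₗ[F] F, ∀ X, f X = 0 → X ∈ W := by
    refine ⟨φ.toLinearMap ∘ₗ W.mkQ, fun X hX => ?_⟩
    simpa using hX
  have hs : ∀ (i j : Fin n) (t : F),
      f (Matrix.single i j t) = t * f (Matrix.single i j 1) := by
    intro i j t
    rw [← smul_eq_mul, ← map_smul, Matrix.smul_single, smul_eq_mul, mul_one]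
  by_cases h1 : ∃ i j, i ≠ j ∧ f (Matrix.single i j 1) ≠ 0
  · obtain ⟨i, j, hij, ha⟩ := h1
    refine ⟨Matrix.single i i 1 +
      Matrix.single i j (-f (Matrix.single i i 1) / f (Matrix.single i j 1)), hf _ ?_, ?_, ?_⟩
    · rw [map_add, hs i j]; field_simp; ring
    · intro h
      have := congrFun (congrFun h i) i
      simp [Matrix.single_apply, hij.symm] at this
    · simp [add_mul, mul_add, hij.symm]
  push Not at h1
  by_cases h2 : ∃ i j, f (Matrix.single i i 1) ≠ f (Matrix.single j j 1)
  · obtain ⟨i, j, hab⟩ := h2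
    have hij : i ≠ j := by rintro rfl; exact hab rfl
    have hd := sub_ne_zero.2 hab
    obtain ⟨x, hx⟩ : ∃ x : F,
        x * f (Matrix.single i i 1) + (1 - x) * f (Matrix.single j j 1) = 0 :=
      ⟨-f (Matrix.single j j 1) / (f (Matrix.single i i 1) - f (Matrix.single j j 1)), by
        field_simp; ring⟩
    refine ⟨Matrix.single i i x + Matrix.single i j x + Matrix.single j i (1 - x) +
      Matrix.single j j (1 - x), hf _ ?_, ?_, ?_⟩
    · simp only [map_add]
      rw [hs i i, hs i j, hs j i, hs j j, h1 i j hij, h1 j i hij.symm]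
      linear_combination hx
    · intro h
      have e1 := congrFun (congrFun h i) i
      have e2 := congrFun (congrFun h j) j
      simp [Matrix.single_apply, hij, hij.symm] at e1 e2
      simp [e1] at e2
    · ext a b
      simp only [add_mul, mul_add, Matrix.single_mul_single_same,
        Matrix.single_mul_single_of_ne _ _ _ _ hij, Matrix.single_mul_single_of_ne _ _ _ _ hij.symm,
        Matrix.add_apply, Matrix.single_apply, Matrix.zero_apply]
      split_ifs <;> ring
  push Not at h2
  let i0 : Fin n := ⟨0, hn⟩
  refine ⟨Matrix.diagonal fun i : Fin n => if (i : ℕ) < p then 1 else 0, hf _ ?_, ?_, ?_⟩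
  · have : (Matrix.diagonal fun i : Fin n => if (i : ℕ) < p then (1 : F) else 0) =
        ∑ k : Fin p, Matrix.single (Fin.castLE hpn k) (Fin.castLE hpn k) 1 := by
      ext a b
      rw [Matrix.sum_apply]
      simp only [Matrix.diagonal_apply, Matrix.single_apply]
      by_cases hab : a = b
      · subst hab
        by_cases ha : (a : ℕ) < p
        · rw [Finset.sum_eq_single ⟨a, ha⟩] <;> simp [ha, Fin.ext_iff]
        · rw [Finset.sum_eq_zero]
          · simp [ha]
          · intro k _
            have := k.2
            rw [if_neg]
            rintro ⟨h, -⟩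
            apply ha
            rw [← h]
            exact this
      · rw [if_neg hab, Finset.sum_eq_zero]
        intro k _
        rw [if_neg]
        rintro ⟨h, h'⟩
        exact hab (h.symm.trans h')
    rw [this, map_sum, Finset.sum_congr rfl (fun k _ => h2 (Fin.castLE hpn k) i0)]
    simp [CharP.cast_eq_zero F p]
  · intro h
    have := congrFun (congrFun h i0) i0
    simp [i0, hp0] at this
  · simp
end

section
/- Assume n ≥ 3 and that char(F) = 0 or char(F) > n. Let W ⊆ M_n(F) be an F-subspace of codimension d with 1 ≤ d < n (as a subspace of the n²-dimensional space M_n(F)) such that W contains no nonzero idempotent (no e ∈ W with e ≠ 0 and e² = e). Then W is contained in the subspace of trace-zero matrices, i.e., Tr(a) = 0 for every a ∈ W. -/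
open Module

lemma perturb_ker {F X Y : Type*} [Field F] [AddCommGroup X] [Module F X] [FiniteDimensional F X]
    [AddCommGroup Y] [Module F Y] (P R : X →ₗ[F] Y) :
    {c : F | ¬ finrank F (LinearMap.ker (P + c • R)) ≤ finrank F (LinearMap.ker P)}.Finite := by
  obtain ⟨M, hM⟩ := Submodule.exists_isCompl (LinearMap.ker P)
  have hinj : LinearMap.ker (P ∘ₗ M.subtype) = ⊥ := by
    rw [LinearMap.ker_eq_bot']
    intro m hm
    have h1 : (m : X) ∈ LinearMap.ker P := by simpa using hm
    have := Submodule.disjoint_def.1 hM.disjoint _ h1 m.2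
    exact Subtype.ext this
  obtain ⟨g, hg⟩ := LinearMap.exists_leftInverse_of_injective _ hinj
  have hfin := Module.End.finite_spectrum (K := F) (V := M) (g ∘ₗ R ∘ₗ M.subtype)
  refine (hfin.image (fun μ => -μ⁻¹)).subset ?_
  intro c hc
  simp only [Set.mem_ofPred_eq] at hc
  by_contra hcon
  apply hc
  have hdis : Disjoint (LinearMap.ker (P + c • R)) M := by
    rw [Submodule.disjoint_def]
    intro m hm hmM
    by_contra hm0
    have hk : P m + c • R m = 0 := by simpa using hm
    have hgm : g (P m) = ⟨m, hmM⟩ := by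
      have := LinearMap.congr_fun hg ⟨m, hmM⟩
      simpa using this
    have h2 : (⟨m, hmM⟩ : M) + c • g (R m) = 0 := by
      rw [← hgm, ← map_smul, ← map_add, hk, map_zero]
    have hc0 : c ≠ 0 := by
      rintro rfl
      apply hm0
      simpa using congrArg Subtype.val h2
    apply hcon
    refine ⟨-c⁻¹, ?_, by simp⟩
    have : Module.End.HasEigenvalue (g ∘ₗ R ∘ₗ M.subtype) (-c⁻¹) := by
      apply Module.End.hasEigenvalue_of_hasEigenvector (x := ⟨m, hmM⟩)
      refine ⟨?_, fun h => hm0 (congrArg Subtype.val h)⟩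
      rw [Module.End.mem_eigenspace_iff]
      have h3 : g (R m) = c⁻¹ • (c • g (R m)) := by rw [smul_smul, inv_mul_cancel₀ hc0, one_smul]
      simp only [LinearMap.comp_apply, Submodule.subtype_apply]
      rw [h3, eq_neg_of_add_eq_zero_right h2]
      simp
    exact this.mem_spectrum
  have h1 := Submodule.finrank_add_finrank_le_of_disjoint hdis
  have h2 := Submodule.finrank_add_eq_of_isCompl hM
  omega

lemma le_one_aux {F M : Type*} [Field F] [AddCommGroup M] [Module F M] [FiniteDimensional F M]
    (S : Submodule F M) (h : finrank F S ≤ 1) : ∃ v : S, ∀ w : S, ∃ c : F, c • v = w :=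
  finrank_le_one_iff.1 h

section core
variable {F E : Type*} [Field F] [AddCommGroup E] [Module F E] [FiniteDimensional F E]

/-- elements of `L` sending `V` into `Q` -/
def NN (L : Submodule F (End F E)) (V Q : Submodule F E) : Submodule F L where
  carrier := {u | ∀ v ∈ V, u.1 v ∈ Q}
  add_mem' := fun {a b} ha hb v hv => Q.add_mem (ha v hv) (hb v hv)
  zero_mem' := fun v hv => Q.zero_mem
  smul_mem' := fun c a ha v hv => Q.smul_mem c (ha v hv)

lemma mem_NN {L : Submodule F (End F E)} {V Q : Submodule F E} {u : L} :
    u ∈ NN L V Q ↔ ∀ v ∈ V, u.1 v ∈ Q := Iff.rfl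

/-- auxiliary linear map -/
def GG (L : Submodule F (End F E)) (V Q : Submodule F E) (a b : End F E) :
    L →ₗ[F] (V →ₗ[F] E ⧸ Q) where
  toFun u := Q.mkQ ∘ₗ a ∘ₗ u.1 ∘ₗ b ∘ₗ V.subtype
  map_add' := by intro x y; ext v; simp
  map_smul' := by intro x y; ext v; simp

/-- transvection -/
def TT (φ : Dual F E) (x : E) (c : F) : End F E := 1 + c • φ.smulRight x

lemma TT_apply (φ : Dual F E) (x : E) (c : F) (z : E) : TT φ x c z = z + (c * φ z) • x := by
  simp [TT, smul_smul]

lemma TT_neg_TT {φ : Dual F E} {x : E} (h : φ x = 0) (c : F) (z : E) :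
    TT φ x (-c) (TT φ x c z) = z := by
  simp [TT_apply, h]

lemma TT_TT_neg {φ : Dual F E} {x : E} (h : φ x = 0) (c : F) (z : E) :
    TT φ x c (TT φ x (-c) z) = z := by
  simp [TT_apply, h]

lemma TT_inj {φ : Dual F E} {x : E} (h : φ x = 0) (c : F) : Function.Injective (TT φ x c) :=
  Function.LeftInverse.injective (g := TT φ x (-c)) (TT_neg_TT h c)

lemma finrank_map_TT {φ : Dual F E} {x : E} (h : φ x = 0) (c : F) (V : Submodule F E) :
    finrank F (V.map (TT φ x c)) = finrank F V :=
  (LinearEquiv.finrank_eq (Submodule.equivMapOfInjective _ (TT_inj h c) V)).symm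

lemma mem_map_TT {φ : Dual F E} {x : E} (h : φ x = 0) (c : F) (V : Submodule F E) (z : E) :
    z ∈ V.map (TT φ x c) ↔ TT φ x (-c) z ∈ V := by
  constructor
  · rintro ⟨v, hv, rfl⟩
    rw [TT_neg_TT h]; exact hv
  · intro hz
    exact ⟨_, hz, TT_TT_neg h c z⟩

lemma NN_eq_ker (L : Submodule F (End F E)) (V Q : Submodule F E) :
    NN L V Q = LinearMap.ker (GG L V Q 1 1) := by
  ext u
  rw [mem_NN, LinearMap.mem_ker, LinearMap.ext_iff]
  simp only [Subtype.forall]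
  refine forall₂_congr fun v hv => ?_
  rw [← Submodule.Quotient.mk_eq_zero Q]
  simp [GG]

lemma perturbV (L : Submodule F (End F E)) (V Q : Submodule F E) (φ : Dual F E) (x : E)  :
    {c : F | ¬ finrank F (NN L (V.map (TT φ x c)) Q) ≤ finrank F (NN L V Q)}.Finite := by
  have e1 : ∀ c : F, NN L (V.map (TT φ x c)) Q =
      LinearMap.ker (GG L V Q 1 1 + c • GG L V Q 1 (φ.smulRight x)) := by
    intro c
    ext u
    rw [mem_NN, LinearMap.mem_ker, LinearMap.ext_iff]
    simp only [Submodule.mem_map, forall_exists_index, and_imp, forall_apply_eq_imp_iff₂,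
      Subtype.forall]
    refine forall₂_congr fun v hv => ?_
    rw [← Submodule.Quotient.mk_eq_zero Q]
    simp [GG, TT_apply, smul_smul]
  have h := perturb_ker (GG L V Q 1 1) (GG L V Q 1 (φ.smulRight x))
  refine h.subset ?_
  intro c hc hc2
  apply hc
  rw [e1 c, NN_eq_ker]
  exact hc2

lemma perturbQ (L : Submodule F (End F E)) (V Q : Submodule F E) (φ : Dual F E) (x : E)
    (h : φ x = 0) :
    {c : F | ¬ finrank F (NN L V (Q.map (TT φ x c))) ≤ finrank F (NN L V Q)}.Finite := by
  have e1 : ∀ c : F, NN L V (Q.map (TT φ x c)) =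
      LinearMap.ker (GG L V Q 1 1 + c • GG L V Q (-φ.smulRight x) 1) := by
    intro c
    ext u
    rw [mem_NN, LinearMap.mem_ker, LinearMap.ext_iff]
    simp only [Subtype.forall]
    refine forall₂_congr fun v hv => ?_
    rw [mem_map_TT h, ← Submodule.Quotient.mk_eq_zero Q]
    simp [GG, TT_apply, smul_smul]
  have h := perturb_ker (GG L V Q 1 1) (GG L V Q (-φ.smulRight x) 1)
  refine h.subset ?_
  intro c hc hc2
  apply hc
  rw [e1 c, NN_eq_ker]
  exact hc2

/-- admissible pair -/
def Adm (L : Submodule F (End F E)) (V Q : Submodule F E) : Prop :=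
  V ≠ ⊥ ∧ V ≤ Q ∧ finrank F (NN L V Q) + finrank F V ≤ finrank F Q + 1

/-- minimal admissible pair -/
def MinAdm (L : Submodule F (End F E)) (m : ℕ) (V Q : Submodule F E) : Prop :=
  Adm L V Q ∧ finrank F (NN L V Q) = m

lemma stuckQ {L : Submodule F (End F E)} {m : ℕ}
    (hm : ∀ V Q, Adm L V Q → m ≤ finrank F (NN L V Q)) {V Q : Submodule F E}
    (h : MinAdm L m V Q) {u : L} (hu : u ∈ NN L V Q) {v : E} (hv : v ∈ Q) : u.1 v ∈ Q := by
  by_contra hcon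
  obtain ⟨⟨h1, h2, h3⟩, h4⟩ := h
  have hlt : NN L (V ⊔ Submodule.span F {v}) Q < NN L V Q := by
    refine lt_of_le_of_ne ?_ ?_
    · intro w hw z hz
      exact hw z (Submodule.mem_sup_left hz)
    · intro he
      rw [← he] at hu
      exact hcon (hu v (Submodule.mem_sup_right (Submodule.mem_span_singleton_self v)))
  have hf := Submodule.finrank_lt_finrank_of_lt hlt
  have hs := Submodule.finrank_add_le_finrank_add_finrank V (Submodule.span F {v})
  have hs1 : finrank F (Submodule.span F {v}) ≤ 1 := by
    simpa using finrank_span_le_card (R := F) ({v} : Set E)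
  have := hm (V ⊔ Submodule.span F {v}) Q ⟨?_, ?_, by omega⟩
  · omega
  · intro hb
    exact h1 (eq_bot_iff.2 (hb ▸ le_sup_left))
  · exact sup_le h2 ((Submodule.span_singleton_le_iff_mem _ _).2 hv)

lemma stuckV {L : Submodule F (End F E)} {m : ℕ}
    (hm : ∀ V Q, Adm L V Q → m ≤ finrank F (NN L V Q)) {V Q : Submodule F E}
    (h : MinAdm L m V Q) {u : L} (hu : u ∈ NN L V Q) {v : E} (hv : v ∈ V) : u.1 v ∈ V := by
  by_contra hcon
  obtain ⟨⟨h1, h2, h3⟩, h4⟩ := h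
  obtain ⟨w, hw, hwV⟩ := Submodule.exists_le_ker_of_notMem hcon
  have hlt : NN L V (Q ⊓ LinearMap.ker w) < NN L V Q := by
    refine lt_of_le_of_ne ?_ ?_
    · intro y hy z hz
      exact (hy z hz).1
    · intro he
      rw [← he] at hu
      exact hw (hu v hv).2
  have hf := Submodule.finrank_lt_finrank_of_lt hlt
  have hk : finrank F E ≤ finrank F (LinearMap.ker w) + 1 := by
    have e1 := LinearMap.finrank_range_add_finrank_ker w
    have e2 := Submodule.finrank_le (LinearMap.range w)
    have e3 : finrank F F = 1 := finrank_self F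
    omega
  have hs := Submodule.finrank_sup_add_finrank_inf_eq Q (LinearMap.ker w)
  have hs2 := Submodule.finrank_le (Q ⊔ LinearMap.ker w)
  have := hm V (Q ⊓ LinearMap.ker w) ⟨h1, le_inf h2 hwV, by omega⟩
  omega

lemma exists_phi {S : Submodule F E} {x : E} (hx : x ∉ S) :
    ∃ φ : Dual F E, φ x = 1 ∧ ∀ s ∈ S, φ s = 0 := by
  obtain ⟨w, hw, hwV⟩ := Submodule.exists_le_ker_of_notMem hx
  refine ⟨(w x)⁻¹ • w, by simp [hw], fun s hs => ?_⟩
  have : w s = 0 := hwV hs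
  simp [this]

lemma step1 [Infinite F] {L : Submodule F (End F E)} {m : ℕ}
    (hm : ∀ V Q, Adm L V Q → m ≤ finrank F (NN L V Q)) {V Q : Submodule F E}
    (h : MinAdm L m V Q) {u : L} (hu : u ∈ NN L V Q) {x v : E} (hx : x ∈ Q) (hxV : x ∉ V)
    (hv : v ∈ V) {φ : Dual F E} (hφv : φ v = 1) (hφx : φ x = 0) :
    ∃ z ∈ V, ∃ μ : F, u.1 x = z + μ • x ∧ φ z = 0 := by
  have hgood : ∀ c : F, finrank F (NN L (V.map (TT φ x c)) Q) ≤ finrank F (NN L V Q) → c ≠ 0 →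
      ∃ z ∈ V, u.1 x = z + (φ (u.1 v) + c * φ z) • x := by
    intro c hc hc0
    have hle : V.map (TT φ x c) ≤ Q := by
      rintro _ ⟨y, hy, rfl⟩
      rw [TT_apply]
      exact Q.add_mem (h.1.2.1 hy) (Q.smul_mem _ hx)
    have hNle : NN L V Q ≤ NN L (V.map (TT φ x c)) Q := by
      intro y hy z hz
      exact stuckQ hm h hy (hle hz)
    have hA : MinAdm L m (V.map (TT φ x c)) Q := by
      have e := Submodule.finrank_mono hNle
      have e2 := finrank_map_TT hφx c V
      have e3 := h.2
      have e4 := h.1.2.2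
      refine ⟨⟨?_, hle, by omega⟩, by omega⟩
      intro hb
      rw [hb] at e2
      simp only [finrank_bot] at e2
      exact h.1.1 (Submodule.finrank_eq_zero.1 e2.symm)
    obtain ⟨v', hv', he⟩ := stuckV hm hA (hNle hu) (Submodule.mem_map_of_mem (f := TT φ x c) hv)
    have hp : u.1 v ∈ V := stuckV hm h hu hv
    refine ⟨c⁻¹ • (v' - u.1 v), V.smul_mem _ (V.sub_mem hv' hp), ?_⟩
    rw [TT_apply, TT_apply, hφv, mul_one, map_add, map_smul] at he
    have h5 : u.1 x = c⁻¹ • (c • u.1 x) := by rw [smul_smul, inv_mul_cancel₀ hc0, one_smul]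
    have h6 : c • u.1 x = (v' - u.1 v) + (c * φ v') • x := by
      rw [eq_comm, ← sub_eq_iff_eq_add'] at he
      rw [← he]; abel
    rw [h5, h6]
    simp only [map_smul, map_sub, smul_eq_mul, smul_add, smul_smul]
    congr 2
    field_simp
    ring
  have hfin := perturbV L V Q φ x
  obtain ⟨c, hc⟩ := (hfin.union (Set.finite_singleton (0 : F))).exists_notMem
  obtain ⟨c', hc'⟩ := ((hfin.union (Set.finite_singleton (0 : F))).union
    (Set.finite_singleton c)).exists_notMem
  simp only [Set.mem_union, Set.mem_ofPred_eq, Set.mem_singleton_iff, not_or, not_not] at hc hc'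
  obtain ⟨z, hz, he⟩ := hgood c hc.1 hc.2
  obtain ⟨z', hz', he'⟩ := hgood c' hc'.1.1 hc'.1.2
  have huniq : z = z' ∧ φ (u.1 v) + c * φ z = φ (u.1 v) + c' * φ z' := by
    have h1 : z - z' = ((φ (u.1 v) + c' * φ z') - (φ (u.1 v) + c * φ z)) • x := by
      rw [sub_smul, sub_eq_sub_iff_add_eq_add, ← he, add_comm, ← he']
    have h2 : ((φ (u.1 v) + c' * φ z') - (φ (u.1 v) + c * φ z)) = 0 := by
      by_contra hne
      apply hxV
      have := V.sub_mem hz hz'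
      rw [h1] at this
      exact (Submodule.smul_mem_iff _ hne).1 this
    rw [h2, zero_smul] at h1
    exact ⟨sub_eq_zero.1 h1, (sub_eq_zero.1 h2).symm⟩
  refine ⟨z, hz, _, he, ?_⟩
  obtain ⟨rfl, h2⟩ := huniq
  have h3 : (c - c') * φ z = 0 := by linear_combination h2
  rcases mul_eq_zero.1 h3 with h4 | h4
  · exact absurd (sub_eq_zero.1 h4).symm hc'.2
  · exact h4

lemma step2 [Infinite F] {L : Submodule F (End F E)} {m : ℕ}
    (hm : ∀ V Q, Adm L V Q → m ≤ finrank F (NN L V Q)) {V Q : Submodule F E}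
    (h : MinAdm L m V Q) {u : L} (hu : u ∈ NN L V Q) {x : E} (hx : x ∈ Q) (hxV : x ∉ V) :
    ∃ μ : F, u.1 x = μ • x := by
  have key : ∀ v ∈ V, v ≠ 0 → ∃ φ : Dual F E, φ v = 1 ∧ φ x = 0 := by
    intro v hv hv0
    have : v ∉ Submodule.span F {x} := by
      intro hmem
      obtain ⟨a, rfl⟩ := Submodule.mem_span_singleton.1 hmem
      have ha : a ≠ 0 := by rintro rfl; simp at hv0
      exact hxV ((Submodule.smul_mem_iff _ ha).1 hv)
    obtain ⟨φ, h1, h2⟩ := exists_phi this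
    exact ⟨φ, h1, h2 x (Submodule.mem_span_singleton_self x)⟩
  obtain ⟨v, hv, hv0⟩ := Submodule.exists_mem_ne_zero_of_ne_bot h.1.1
  obtain ⟨φ, h1, h2⟩ := key v hv hv0
  obtain ⟨z, hz, μ, he, -⟩ := step1 hm h hu hx hxV hv h1 h2
  by_cases hz0 : z = 0
  · exact ⟨μ, by rw [he, hz0, zero_add]⟩
  exfalso
  obtain ⟨φ', h1', h2'⟩ := key z hz hz0
  obtain ⟨z', hz', μ', he', h0⟩ := step1 hm h hu hx hxV hz h1' h2'
  have h3 : φ' (u.1 x) = 1 := by rw [he, map_add, map_smul, h1', h2']; simp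
  have h4 : φ' (u.1 x) = 0 := by rw [he', map_add, map_smul, h0, h2']; simp
  exact one_ne_zero (h3.symm.trans h4)

lemma step3 [Infinite F] {L : Submodule F (End F E)} {m : ℕ} (hm2 : 2 ≤ m)
    (hm : ∀ V Q, Adm L V Q → m ≤ finrank F (NN L V Q)) {V Q : Submodule F E}
    (h : MinAdm L m V Q) : ∃ x ∈ Q, x ∉ V := by
  by_contra! hcon
  have : finrank F Q ≤ finrank F V := Submodule.finrank_mono hcon
  have h1 := h.2
  have h2 := h.1.2.2
  omega

lemma step4 [Infinite F] {L : Submodule F (End F E)} {m : ℕ} (hm2 : 2 ≤ m)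
    (hm : ∀ V Q, Adm L V Q → m ≤ finrank F (NN L V Q)) {V Q : Submodule F E}
    (h : MinAdm L m V Q) {u : L} (hu : u ∈ NN L V Q) :
    ∃ μ : F, ∀ x ∈ Q, u.1 x = μ • x := by
  have key : ∀ x ∈ Q, x ∉ V → ∃ μ : F, u.1 x = μ • x ∧ ∀ v ∈ V, u.1 v = μ • v := by
    intro x hx hxV
    obtain ⟨μ, he⟩ := step2 hm h hu hx hxV
    refine ⟨μ, he, fun v hv => ?_⟩
    have hxv : x + v ∉ V := fun hh => hxV ((Submodule.add_mem_iff_left _ hv).1 hh)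
    obtain ⟨μ', he'⟩ := step2 hm h hu (Q.add_mem hx (h.1.2.1 hv)) hxv
    have huv : u.1 v ∈ V := stuckV hm h hu hv
    rw [map_add, he, smul_add] at he'
    have h1 : u.1 v - μ' • v = (μ' - μ) • x := by
      rw [sub_smul, sub_eq_sub_iff_add_eq_add, ← he', add_comm]
    have h2 : μ' - μ = 0 := by
      by_contra hne
      apply hxV
      have := V.sub_mem huv (V.smul_mem μ' hv)
      rw [h1] at this
      exact (Submodule.smul_mem_iff _ hne).1 this
    rw [h2, zero_smul, sub_eq_zero] at h1
    rw [h1, sub_eq_zero.1 h2]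
  obtain ⟨x, hx, hxV⟩ := step3 hm2 hm h
  obtain ⟨μ, h1, h2⟩ := key x hx hxV
  refine ⟨μ, fun y hy => ?_⟩
  by_cases hyV : y ∈ V
  · exact h2 y hyV
  obtain ⟨μ', h1', h2'⟩ := key y hy hyV
  obtain ⟨v, hv, hv0⟩ := Submodule.exists_mem_ne_zero_of_ne_bot h.1.1
  have : μ' • v = μ • v := by rw [← h2 v hv, ← h2' v hv]
  rw [h1', smul_left_injective F hv0 this]

lemma step5 [Infinite F] {L : Submodule F (End F E)} {m : ℕ} (hm2 : 2 ≤ m)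
    (hm : ∀ V Q, Adm L V Q → m ≤ finrank F (NN L V Q)) {V Q : Submodule F E}
    (h : MinAdm L m V Q) {u : L} (hu : u ∈ NN L V Q) :
    ∃ μ : F, ∀ x, u.1 x = μ • x := by
  obtain ⟨μ, hμ⟩ := step4 hm2 hm h hu
  refine ⟨μ, fun y => ?_⟩
  by_cases hy : y ∈ Q
  · exact hμ y hy
  obtain ⟨x, hx, hxV⟩ := step3 hm2 hm h
  have hxS : x ∉ V ⊔ Submodule.span F {y} := by
    intro hmem
    obtain ⟨v, hv, w, hw, he⟩ := Submodule.mem_sup.1 hmem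
    obtain ⟨a, rfl⟩ := Submodule.mem_span_singleton.1 hw
    by_cases ha : a = 0
    · apply hxV
      rw [← he, ha, zero_smul, add_zero]; exact hv
    · apply hy
      have : a • y ∈ Q := by
        rw [← he] at hx
        exact (Submodule.add_mem_iff_right _ (h.1.2.1 hv)).1 hx
      exact (Submodule.smul_mem_iff _ ha).1 this
  obtain ⟨φ, h1, h2⟩ := exists_phi hxS
  have hφy : φ y = 0 := h2 y (Submodule.mem_sup_right (Submodule.mem_span_singleton_self y))
  have hφV : ∀ v ∈ V, φ v = 0 := fun v hv => h2 v (Submodule.mem_sup_left hv)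
  obtain ⟨c, hc⟩ := ((perturbQ L V Q φ y hφy).union (Set.finite_singleton (0 : F))).exists_notMem
  simp only [Set.mem_union, Set.mem_ofPred_eq, Set.mem_singleton_iff, not_or, not_not] at hc
  obtain ⟨hc1, hc0⟩ := hc
  have hVle : V ≤ Q.map (TT φ y c) := by
    intro v hv
    rw [mem_map_TT hφy, TT_apply, hφV v hv]
    simpa using h.1.2.1 hv
  have hNle : NN L V Q ≤ NN L V (Q.map (TT φ y c)) := by
    intro w hw z hz
    exact hVle (stuckV hm h hw hz)
  have hA : MinAdm L m V (Q.map (TT φ y c)) := by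
    have e := Submodule.finrank_mono hNle
    have e2 := finrank_map_TT hφy c Q
    have e3 := h.2
    have e4 := h.1.2.2
    exact ⟨⟨h.1.1, hVle, by omega⟩, by omega⟩
  obtain ⟨μ', hμ'⟩ := step4 hm2 hm hA (hNle hu)
  obtain ⟨v, hv, hv0⟩ := Submodule.exists_mem_ne_zero_of_ne_bot h.1.1
  have hmm : μ' • v = μ • v := by rw [← hμ' v (hVle hv), ← hμ v (h.1.2.1 hv)]
  have hmm' : μ' = μ := smul_left_injective F hv0 hmm
  subst hmm'
  have h3 := hμ' _ (Submodule.mem_map_of_mem (f := TT φ y c) hx)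
  rw [TT_apply, h1, mul_one, map_add, map_smul, smul_add, hμ x hx, add_right_inj, smul_comm] at h3
  exact smul_right_injective E hc0 h3

theorem exists_V [Infinite F] [Nontrivial E] (L : Submodule F (End F E))
    (hL : finrank F L ≤ finrank F E) (h1L : (1 : End F E) ∈ L) :
    ∃ V : Submodule F E, V ≠ ⊥ ∧ ∀ u ∈ L, (∀ v ∈ V, u v ∈ V) → ∃ μ : F, u = μ • 1 := by
  classical
  have hex : ∃ m : ℕ, ∃ V Q, MinAdm L m V Q := by
    obtain ⟨v, hv⟩ := exists_ne (0 : E)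
    refine ⟨_, Submodule.span F {v}, ⊤, ⟨?_, le_top, ?_⟩, rfl⟩
    · simpa using hv
    · have := Submodule.finrank_le (NN L (Submodule.span F {v}) ⊤)
      have hs1 : finrank F (Submodule.span F {v}) ≤ 1 := by
        simpa using finrank_span_le_card (R := F) ({v} : Set E)
      rw [finrank_top]
      omega
  obtain ⟨V, Q, h⟩ := Nat.find_spec hex
  set m := Nat.find hex with hmdef
  have hm : ∀ V Q, Adm L V Q → m ≤ finrank F (NN L V Q) := fun V Q hA =>
    Nat.find_min' hex ⟨V, Q, hA, rfl⟩
  refine ⟨V, h.1.1, fun u hu huV => ?_⟩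
  have huN : (⟨u, hu⟩ : L) ∈ NN L V Q := fun v hv => h.1.2.1 (huV v hv)
  by_cases hm2 : 2 ≤ m
  · obtain ⟨μ, hμ⟩ := step5 hm2 hm h huN
    exact ⟨μ, by ext x; simpa using hμ x⟩
  have hone : (⟨1, h1L⟩ : L) ∈ NN L V Q := fun v hv => by simpa using h.1.2.1 hv
  have hle : finrank F (NN L V Q) ≤ 1 := by
    have := h.2
    omega
  obtain ⟨g, hg⟩ := le_one_aux (NN L V Q) hle
  obtain ⟨a, ha⟩ := hg ⟨_, hone⟩
  obtain ⟨b, hb⟩ := hg ⟨_, huN⟩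
  have ha' : a • (g.1.1 : End F E) = 1 := congrArg (fun t => t.1.1) ha
  have hb' : b • (g.1.1 : End F E) = u := congrArg (fun t => t.1.1) hb
  have ha0 : a ≠ 0 := by
    rintro rfl
    rw [zero_smul] at ha'
    exact zero_ne_one ha'
  refine ⟨b * a⁻¹, ?_⟩
  rw [← ha', smul_smul, mul_assoc, inv_mul_cancel₀ ha0, mul_one, hb']

end core

section final
variable {F : Type*} [Field F] {n : ℕ}

/-- the trace form on matrices -/
def trB (F : Type*) [Field F] (n : ℕ) : LinearMap.BilinForm F (Matrix (Fin n) (Fin n) F) :=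
  LinearMap.mk₂ F (fun A B => Matrix.trace (A * B))
    (by intros; simp [add_mul]) (by intros; simp) (by intros; simp [mul_add]) (by intros; simp)

lemma trB_apply (A B : Matrix (Fin n) (Fin n) F) : trB F n A B = Matrix.trace (A * B) := rfl

lemma trB_refl : (trB F n).IsRefl := by
  intro A B h
  rw [trB_apply] at *
  rw [Matrix.trace_mul_comm]; exact h

lemma trB_nondeg : (trB F n).Nondegenerate := by
  have key : ∀ A : Matrix (Fin n) (Fin n) F, (∀ B, Matrix.trace (A * B) = 0) → A = 0 := by
    intro A hA
    rw [Matrix.ext_iff_trace_mul_right]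
    intro x
    simpa using hA x
  refine ⟨fun A hA => key A hA, fun A hA => key A fun B => ?_⟩
  rw [Matrix.trace_mul_comm]
  exact hA B

theorem main_aux [Infinite F] (hn : 0 < n) (W : Submodule F (Matrix (Fin n) (Fin n) F))
    (hcodim : finrank F (Matrix (Fin n) (Fin n) F ⧸ W) < n)
    (hidem : ∀ e ∈ W, e * e = e → e = 0) :
    ∀ a ∈ W, Matrix.trace a = 0 := by
  set U := (trB F n).orthogonal W with hU
  have hUmem : ∀ u, u ∈ U ↔ ∀ w ∈ W, Matrix.trace (w * u) = 0 := fun u => Iff.rfl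
  by_cases h1 : (1 : Matrix (Fin n) (Fin n) F) ∈ U
  · intro a ha
    simpa using (hUmem 1).1 h1 a ha
  exfalso
  have hUfin : finrank F U < n := by
    have e1 := LinearMap.BilinForm.finrank_orthogonal (trB_nondeg (F := F) (n := n)) W
    have e2 := Submodule.finrank_quotient_add_finrank W
    rw [← hU] at e1
    omega
  have hWmem : ∀ w, (∀ u ∈ U, Matrix.trace (u * w) = 0) → w ∈ W := by
    intro w hw
    rw [← LinearMap.BilinForm.orthogonal_orthogonal trB_nondeg trB_refl W]
    exact hw
  haveI : Nonempty (Fin n) := ⟨⟨0, hn⟩⟩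
  let T := (Matrix.toLinAlgEquiv' : Matrix (Fin n) (Fin n) F ≃ₐ[F] _)
  let L : Submodule F (End F (Fin n → F)) :=
    (U ⊔ Submodule.span F {1}).map T.toLinearMap
  have hLfin : finrank F L ≤ finrank F (Fin n → F) := by
    have e1 : finrank F L ≤ _ := Submodule.finrank_map_le T.toLinearMap (U ⊔ Submodule.span F {1})
    have e2 := Submodule.finrank_add_le_finrank_add_finrank U
      (Submodule.span F {(1 : Matrix (Fin n) (Fin n) F)})
    have e3 : finrank F (Submodule.span F {(1 : Matrix (Fin n) (Fin n) F)}) ≤ 1 := by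
      simpa using finrank_span_le_card (R := F) ({1} : Set (Matrix (Fin n) (Fin n) F))
    rw [finrank_fin_fun]
    omega
  have h1L : (1 : End F (Fin n → F)) ∈ L :=
    ⟨1, Submodule.mem_sup_right (Submodule.mem_span_singleton_self _), map_one T⟩
  obtain ⟨V, hV0, hV⟩ := exists_V L hLfin h1L
  obtain ⟨p, hp⟩ := LinearMap.exists_leftInverse_of_injective V.subtype (Submodule.ker_subtype V)
  have hpv : ∀ v (hv : v ∈ V), p v = ⟨v, hv⟩ := fun v hv => LinearMap.congr_fun hp ⟨v, hv⟩
  set e0 : Matrix (Fin n) (Fin n) F := T.symm (V.subtype ∘ₗ p) with he0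
  have hTe0 : T e0 = V.subtype ∘ₗ p := T.apply_symm_apply _
  have hTV : ∀ v ∈ V, T e0 v = v := fun v hv => by rw [hTe0]; simp [hpv v hv]
  have hTm : ∀ x, T e0 x ∈ V := fun x => by rw [hTe0]; simp
  have hsq : e0 * e0 = e0 := by
    apply T.injective
    rw [map_mul]
    exact LinearMap.ext (fun x => hTV _ (hTm x))
  let θ : U →ₗ[F] Matrix (Fin n) (Fin n) F :=
    { toFun := fun u => (1 - e0) * u.1 * e0
      map_add' := by intros; simp [mul_add, add_mul]
      map_smul' := by intros; simp }
  have hθ : LinearMap.ker θ = ⊥ := by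
    rw [LinearMap.ker_eq_bot']
    intro u hu
    have hu' : (1 - e0) * u.1 * e0 = 0 := hu
    have hst : ∀ v ∈ V, T u.1 v ∈ V := by
      intro v hv
      have h2 : u.1 * e0 = e0 * (u.1 * e0) := by
        rw [sub_mul, sub_mul, one_mul, sub_eq_zero] at hu'
        rw [← mul_assoc]; exact hu'
      have h3 := congrArg (fun M => T M v) h2
      simp only [map_mul, Module.End.mul_apply, hTV v hv] at h3
      rw [h3]; exact hTm _
    obtain ⟨μ, hμ⟩ := hV (T u.1) ⟨u.1, Submodule.mem_sup_left u.2, rfl⟩ hst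
    have hμ' : u.1 = μ • 1 := by
      apply T.injective
      rw [hμ, map_smul, map_one]
    by_cases hz : μ = 0
    · rw [hz, zero_smul] at hμ'
      exact Subtype.ext hμ'
    · exact absurd ((Submodule.smul_mem_iff _ hz).1 (hμ' ▸ u.2)) h1
  obtain ⟨g, hg⟩ := LinearMap.exists_leftInverse_of_injective θ hθ
  let l : Dual F (Matrix (Fin n) (Fin n) F) :=
    -((trB F n).flip e0 ∘ₗ U.subtype ∘ₗ g)
  obtain ⟨Y, hY⟩ := (LinearMap.BilinForm.toDual (trB F n) trB_nondeg).surjective l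
  have hY' : ∀ u ∈ U, Matrix.trace (Y * ((1 - e0) * u * e0)) = - Matrix.trace (u * e0) := by
    intro u hu
    have h2 := LinearMap.congr_fun hY (θ ⟨u, hu⟩)
    have h3 : g (θ ⟨u, hu⟩) = ⟨u, hu⟩ := LinearMap.congr_fun hg ⟨u, hu⟩
    rw [LinearMap.BilinForm.toDual_def] at h2
    simp only [l, LinearMap.neg_apply, LinearMap.comp_apply, h3] at h2
    exact h2
  have hmem : e0 + e0 * Y * (1 - e0) ∈ W := by
    apply hWmem
    intro u hu
    rw [mul_add, Matrix.trace_add]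
    have h2 : Matrix.trace (u * (e0 * Y * (1 - e0))) =
        Matrix.trace (Y * ((1 - e0) * u * e0)) := by
      rw [← Matrix.trace_mul_comm ((1 - e0) * u * e0) Y]
      rw [show u * (e0 * Y * (1 - e0)) = (u * e0 * Y) * (1 - e0) by simp only [mul_assoc],
        Matrix.trace_mul_comm]
      simp only [mul_assoc]
    rw [h2, hY' u hu, add_neg_cancel]
  have h10 : (1 - e0) * e0 = 0 := by rw [sub_mul, one_mul, hsq, sub_self]
  have hee0 : (e0 + e0 * Y * (1 - e0)) * e0 = e0 := by
    rw [add_mul, hsq, mul_assoc (e0 * Y), h10, mul_zero, add_zero]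
  have hid : (e0 + e0 * Y * (1 - e0)) * (e0 + e0 * Y * (1 - e0)) = e0 + e0 * Y * (1 - e0) := by
    conv_lhs => rw [mul_add, hee0]
    congr 1
    rw [← mul_assoc, ← mul_assoc, hee0]
  have hz := hidem _ hmem hid
  rw [hz, zero_mul] at hee0
  apply hV0
  rw [eq_bot_iff]
  intro v hv
  have := hTV v hv
  rw [← hee0, map_zero] at this
  simpa using this.symm

end final

theorem stmt_16 (F : Type*) [Field F] [IsAlgClosed F] (n : ℕ) (hn : 3 ≤ n)
    (hchar : ringChar F = 0 ∨ n < ringChar F)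
    (d : ℕ) (hd1 : 1 ≤ d) (hdn : d < n)
    (W : Submodule F (Matrix (Fin n) (Fin n) F))
    (hcodim : Module.finrank F (Matrix (Fin n) (Fin n) F ⧸ W) = d)
    (hidem : ∀ e ∈ W, e * e = e → e = 0) :
    ∀ a ∈ W, Matrix.trace a = 0 := by
  haveI : Infinite F := IsAlgClosed.instInfinite
  exact main_aux (by omega) W (by omega) hidem
end
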